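/- arXiv:1312.1640 — 8 statements merged into one kernel-verified Lean document; each statement's English description precedes it below -/
import Mathlib

section
/- If A, B, C are three affinely independent (non-collinear) points in the Euclidean plane, then the point minimizing P ↦ dist(P,A) + dist(P,B) + dist(P,C) is unique: if F₁ and F₂ both minimize this function over the plane, then F₁ = F₂. -/
open EuclideanGeometry

/-!
The sum of distances is strictly midpoint-convex along any segment whose line misses one of the
given points: for such a point `a`, the vectors `x -ᵥ a` and `y -ᵥ a` are not on a common ray, so
strict convexity of the norm makes `dist (midpoint ℝ x y) a` smaller than the mean of `dist x a`
and `dist y a`. Since the given points are not collinear, every line misses one of them, and the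
midpoint of two distinct minimizers would do better than both.
-/

theorem dist_midpoint_le {V P : Type*} [SeminormedAddCommGroup V] [NormedSpace ℝ V]
    [PseudoMetricSpace P] [NormedAddTorsor V P] (x y a : P) :
    dist (midpoint ℝ x y) a ≤ (dist x a + dist y a) / 2 := by
  simpa using dist_midpoint_midpoint_le' (𝕜 := ℝ) x y a a

theorem dist_midpoint_eq_norm_add {V P : Type*} [SeminormedAddCommGroup V] [NormedSpace ℝ V]
    [PseudoMetricSpace P] [NormedAddTorsor V P] (x y a : P) :
    dist (midpoint ℝ x y) a = ‖(x -ᵥ a) + (y -ᵥ a)‖ / 2 := by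
  rw [dist_eq_norm_vsub V, midpoint_vsub, ← smul_add, norm_smul, invOf_eq_inv, norm_inv,
    Real.norm_ofNat, inv_mul_eq_div]

theorem collinear_of_sameRay_vsub {k V P : Type*} [Field k] [LinearOrder k]
    [IsStrictOrderedRing k] [AddCommGroup V] [Module k V] [AddTorsor V P] {a x y : P}
    (h : SameRay k (x -ᵥ a) (y -ᵥ a)) : Collinear k {a, x, y} := by
  rcases wbtw_total_of_sameRay_vsub_left h with hxy | hyx
  · exact hxy.collinear
  · simpa only [Set.pair_comm] using hyx.collinear

theorem collinear_affineSpan_iff {k V P : Type*} [DivisionRing k] [AddCommGroup V] [Module k V]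
    [AddTorsor V P] {s : Set P} : Collinear k (affineSpan k s : Set P) ↔ Collinear k s := by
  rw [collinear_iff_rank_le_one, collinear_iff_rank_le_one, ← direction_affineSpan,
    AffineSubspace.affineSpan_coe, direction_affineSpan]

theorem exists_not_collinear_of_not_collinear_range {k V P ι : Type*} [DivisionRing k]
    [AddCommGroup V] [Module k V] [AddTorsor V P] {p : ι → P} {x y : P}
    (hp : ¬ Collinear k (Set.range p)) (hxy : x ≠ y) : ∃ i, ¬ Collinear k {p i, x, y} := by
  by_contra! h
  have range_subset_line : Set.range p ⊆ line[k, x, y] := by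
    rintro _ ⟨i, rfl⟩
    exact (h i).mem_affineSpan_of_mem_of_ne (by simp) (by simp) (by simp) hxy
  exact hp ((collinear_affineSpan_iff.mpr (collinear_pair k x y)).subset range_subset_line)

/-- The objective function of the weighted Fermat–Torricelli (Weber) problem with sites `p i` and
weights `w i`. -/
noncomputable def weightedDistSum {P ι : Type*} [PseudoMetricSpace P] [Fintype ι]
    (w : ι → ℝ) (p : ι → P) (x : P) : ℝ :=
  ∑ i, w i * dist x (p i)

section StrictConvexSpace

variable {V P ι : Type*} [NormedAddCommGroup V] [NormedSpace ℝ V] [StrictConvexSpace ℝ V]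
  [PseudoMetricSpace P] [NormedAddTorsor V P] [Fintype ι]

theorem dist_midpoint_lt_of_not_collinear {x y a : P} (h : ¬ Collinear ℝ {a, x, y}) :
    dist (midpoint ℝ x y) a < (dist x a + dist y a) / 2 := by
  have hray : ¬ SameRay ℝ (x -ᵥ a) (y -ᵥ a) := mt collinear_of_sameRay_vsub h
  rw [dist_midpoint_eq_norm_add, dist_eq_norm_vsub V x a, dist_eq_norm_vsub V y a]
  gcongr
  exact norm_add_lt_of_not_sameRay hray

theorem weightedDistSum_midpoint_lt {w : ι → ℝ} {p : ι → P} {x y : P} (hw : ∀ i, 0 < w i)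
    (hp : ¬ Collinear ℝ (Set.range p)) (hxy : x ≠ y) :
    weightedDistSum w p (midpoint ℝ x y) <
      (weightedDistSum w p x + weightedDistSum w p y) / 2 := by
  obtain ⟨j, hj⟩ := exists_not_collinear_of_not_collinear_range hp hxy
  calc ∑ i, w i * dist (midpoint ℝ x y) (p i)
      < ∑ i, w i * ((dist x (p i) + dist y (p i)) / 2) :=
        Finset.sum_lt_sum
          (fun i _ ↦ mul_le_mul_of_nonneg_left (dist_midpoint_le x y (p i)) (hw i).le)
          ⟨j, Finset.mem_univ j,
            mul_lt_mul_of_pos_left (dist_midpoint_lt_of_not_collinear hj) (hw j)⟩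
    _ = (∑ i, w i * dist x (p i) + ∑ i, w i * dist y (p i)) / 2 := by
        simp only [mul_div_assoc', mul_add, Finset.sum_add_distrib, ← Finset.sum_div]

theorem fermat_point_unique_general {w : ι → ℝ} {p : ι → P} {x y : P} (hw : ∀ i, 0 < w i)
    (hp : ¬ Collinear ℝ (Set.range p)) (hx : IsMinOn (weightedDistSum w p) Set.univ x)
    (hy : IsMinOn (weightedDistSum w p) Set.univ y) : x = y := by
  by_contra hxy
  have hmid := weightedDistSum_midpoint_lt hw hp hxy
  have hxm := isMinOn_univ_iff.mp hx (midpoint ℝ x y)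
  have hym := isMinOn_univ_iff.mp hy (midpoint ℝ x y)
  linarith

end StrictConvexSpace

/-- Uniqueness of the Fermat–Torricelli point for three affinely independent points. -/
theorem fermat_point_unique
    (A B C : EuclideanSpace ℝ (Fin 2))
    (hABC : AffineIndependent ℝ ![A, B, C])
    (F₁ F₂ : EuclideanSpace ℝ (Fin 2))
    (hF₁ : ∀ P : EuclideanSpace ℝ (Fin 2),
      dist F₁ A + dist F₁ B + dist F₁ C ≤ dist P A + dist P B + dist P C)
    (hF₂ : ∀ P : EuclideanSpace ℝ (Fin 2),
      dist F₂ A + dist F₂ B + dist F₂ C ≤ dist P A + dist P B + dist P C) :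
    F₁ = F₂ := by
  refine fermat_point_unique_general (w := 1) (p := ![A, B, C]) (fun _ ↦ one_pos)
    (affineIndependent_iff_not_collinear.mp hABC) ?_ ?_ <;>
    simpa [isMinOn_univ_iff, weightedDistSum, Fin.sum_univ_three]
end

section
/- Let A, B, C be three points in the Euclidean plane and let F be a point distinct from A, B and C such that the angles ∠AFB, ∠BFC and ∠CFA are all equal to 2π/3 (120°). Then F minimizes the sum of distances: for every point P, dist(F,A) + dist(F,B) + dist(F,C) ≤ dist(P,A) + dist(P,B) + dist(P,C). -/
open EuclideanGeometry Real

/-!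
The unit vectors from `F` towards `A`, `B`, `C` have pairwise inner products `-1/2`, so their sum
has squared norm `3 - 3 = 0`. These unit vectors are also the gradients at `F` of the three
distance functions, up to sign, so `F` is a critical point of the sum of distances; by convexity
it is a global minimum.
-/

theorem cos_two_mul_pi_div_three : cos (2 * π / 3) = -(1 / 2) := by
  rw [show 2 * π / 3 = π - π / 3 by ring, cos_pi_sub, cos_pi_div_three]

section NormedSpace

open NormedSpace

variable {V : Type*} [NormedAddCommGroup V] [NormedSpace ℝ V]

theorem norm_normalize_le_one (x : V) : ‖normalize x‖ ≤ 1 := by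
  rw [NormedSpace.normalize, norm_smul, norm_inv, norm_norm]
  exact inv_mul_le_one

end NormedSpace

section InnerProductSpace

open NormedSpace
open scoped RealInnerProductSpace

variable {V : Type*} [NormedAddCommGroup V] [InnerProductSpace ℝ V]

/-- Both sides vanish at zero vectors: `normalize 0 = 0`, and any angle with `0` is `π / 2`. -/
theorem inner_normalize_normalize (x y : V) :
    ⟪normalize x, normalize y⟫ = cos (InnerProductGeometry.angle x y) := by
  rw [InnerProductGeometry.cos_angle, NormedSpace.normalize, NormedSpace.normalize,
    real_inner_smul_left, real_inner_smul_right]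
  ring

theorem inner_normalize_self (x : V) : ⟪normalize x, x⟫ = ‖x‖ := by
  rw [NormedSpace.normalize, real_inner_smul_left, real_inner_self_eq_norm_mul_norm, ← mul_assoc,
    inv_mul_mul_self]

theorem norm_add_inner_normalize_le_norm_add (x v : V) :
    ‖x‖ + ⟪normalize x, v⟫ ≤ ‖x + v‖ :=
  calc
    ‖x‖ + ⟪normalize x, v⟫ = ⟪normalize x, x + v⟫ := by
      rw [inner_add_right, inner_normalize_self]
    _ ≤ ‖normalize x‖ * ‖x + v‖ := real_inner_le_norm _ _
    _ ≤ ‖x + v‖ := mul_le_of_le_one_left (norm_nonneg _) (norm_normalize_le_one x)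

theorem normalize_add_add_eq_zero_of_angle_eq_two_mul_pi_div_three {x y z : V}
    (hxy : InnerProductGeometry.angle x y = 2 * π / 3)
    (hyz : InnerProductGeometry.angle y z = 2 * π / 3)
    (hzx : InnerProductGeometry.angle z x = 2 * π / 3) :
    normalize x + normalize y + normalize z = 0 := by
  have norm_sq_le_one (v : V) : ‖normalize v‖ ^ 2 ≤ 1 :=
    pow_le_one₀ (norm_nonneg _) (norm_normalize_le_one v)
  have norm_sq_sum : ‖normalize x + normalize y + normalize z‖ ^ 2 =
      ‖normalize x‖ ^ 2 + ‖normalize y‖ ^ 2 + ‖normalize z‖ ^ 2 - 3 := by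
    rw [norm_add_sq_real, norm_add_sq_real, inner_add_left,
      real_inner_comm (normalize z) (normalize x)]
    simp only [inner_normalize_normalize, hxy, hyz, hzx, cos_two_mul_pi_div_three]
    ring
  have norm_sq_sum_nonpos : ‖normalize x + normalize y + normalize z‖ ^ 2 ≤ 0 := by
    linarith [norm_sq_le_one x, norm_sq_le_one y, norm_sq_le_one z]
  exact norm_eq_zero.mp (pow_eq_zero_iff two_ne_zero |>.mp
    (norm_sq_sum_nonpos.antisymm (sq_nonneg _)))

variable {P : Type*} [MetricSpace P] [NormedAddTorsor V P]

theorem dist_add_inner_normalize_le_dist (A F Q : P) :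
    dist F A + ⟪normalize (A -ᵥ F), F -ᵥ Q⟫ ≤ dist Q A := by
  simpa only [vsub_add_vsub_cancel, ← dist_eq_norm_vsub V, dist_comm A] using
    norm_add_inner_normalize_le_norm_add (A -ᵥ F) (F -ᵥ Q)

theorem sum_dist_le_sum_dist_of_sum_normalize_vsub_eq_zero {ι : Type*} (s : Finset ι)
    (A : ι → P) (F : P) (hF : ∑ i ∈ s, normalize (A i -ᵥ F) = 0) (Q : P) :
    ∑ i ∈ s, dist F (A i) ≤ ∑ i ∈ s, dist Q (A i) :=
  calc
    ∑ i ∈ s, dist F (A i) = ∑ i ∈ s, (dist F (A i) + ⟪normalize (A i -ᵥ F), F -ᵥ Q⟫) := by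
      rw [Finset.sum_add_distrib, ← sum_inner, hF, inner_zero_left, add_zero]
    _ ≤ ∑ i ∈ s, dist Q (A i) :=
      Finset.sum_le_sum fun i _ ↦ dist_add_inner_normalize_le_dist (A i) F Q

theorem fermat_point_of_angles_general {A B C F : P} (hAB : ∠ A F B = 2 * π / 3)
    (hBC : ∠ B F C = 2 * π / 3) (hCA : ∠ C F A = 2 * π / 3) (Q : P) :
    dist F A + dist F B + dist F C ≤ dist Q A + dist Q B + dist Q C := by
  have hF := normalize_add_add_eq_zero_of_angle_eq_two_mul_pi_div_three hAB hBC hCA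
  simpa [Fin.sum_univ_three] using
    sum_dist_le_sum_dist_of_sum_normalize_vsub_eq_zero Finset.univ ![A, B, C] F
      (by simpa [Fin.sum_univ_three] using hF) Q

end InnerProductSpace

/-- If `F` sees each pair among `A`, `B`, `C` under an angle of `120°`, then `F`
minimizes the sum of distances to `A`, `B`, `C`. -/
theorem fermat_point_of_angles
    (A B C F : EuclideanSpace ℝ (Fin 2))
    (hFA : F ≠ A) (hFB : F ≠ B) (hFC : F ≠ C)
    (h₁ : ∠ A F B = 2 * π / 3)
    (h₂ : ∠ B F C = 2 * π / 3)
    (h₃ : ∠ C F A = 2 * π / 3) :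
    ∀ P : EuclideanSpace ℝ (Fin 2),
      dist F A + dist F B + dist F C ≤ dist P A + dist P B + dist P C :=
  fermat_point_of_angles_general h₁ h₂ h₃
end

section
/- Let A, B, C be three pairwise distinct points in the Euclidean plane such that the angle ∠ACB at the vertex C is at least 2π/3 (120°). Then C itself minimizes the sum of distances: for every point P, dist(C,A) + dist(C,B) ≤ dist(P,A) + dist(P,B) + dist(P,C). -/
open EuclideanGeometry Real

/-!
Let `u` and `v` be the unit vectors from `C` towards `A` and `B`. By Cauchy–Schwarz, moving from `C`
to `P` shortens the distance to `A` by at most `⟪u, P - C⟫` and the distance to `B` by at most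
`⟪v, P - C⟫`, so the total saving is at most `‖u + v‖ * dist P C`. Since
`‖u + v‖ ^ 2 = 2 + 2 * cos (∠ A C B)`, an angle of at least `120°` gives `‖u + v‖ ≤ 1`, and the
saving never exceeds the new distance `dist P C`.
-/

section InnerProductSpace

open NormedSpace
open scoped RealInnerProductSpace

variable {V : Type*} [NormedAddCommGroup V] [InnerProductSpace ℝ V]

theorem real_inner_normalize_self (a : V) : ⟪normalize a, a⟫ = ‖a‖ := by
  rcases eq_or_ne a 0 with rfl | ha
  · simp
  · rw [NormedSpace.normalize, real_inner_smul_left, real_inner_self_eq_norm_mul_norm,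
      inv_mul_cancel_left₀ (norm_ne_zero_iff.mpr ha)]

theorem real_inner_normalize_le_norm (a x : V) : ⟪normalize a, x⟫ ≤ ‖x‖ := by
  rcases eq_or_ne a 0 with rfl | ha
  · simp
  · simpa [norm_normalize ha] using real_inner_le_norm (normalize a) x

theorem norm_le_norm_sub_add_inner_normalize (a p : V) :
    ‖a‖ ≤ ‖p - a‖ + ⟪normalize a, p⟫ := by
  have h := real_inner_normalize_le_norm a (a - p)
  rw [inner_sub_right, real_inner_normalize_self, norm_sub_rev] at h
  linarith

theorem sum_norm_le_sum_norm_sub_add_norm_sum_normalize_mul {ι : Type*} (s : Finset ι)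
    (a : ι → V) (p : V) :
    ∑ i ∈ s, ‖a i‖ ≤ ∑ i ∈ s, ‖p - a i‖ + ‖∑ i ∈ s, normalize (a i)‖ * ‖p‖ :=
  calc
    ∑ i ∈ s, ‖a i‖ ≤ ∑ i ∈ s, (‖p - a i‖ + ⟪normalize (a i), p⟫) :=
      Finset.sum_le_sum fun i _ ↦ norm_le_norm_sub_add_inner_normalize (a i) p
    _ = ∑ i ∈ s, ‖p - a i‖ + ⟪∑ i ∈ s, normalize (a i), p⟫ := by
      rw [Finset.sum_add_distrib, sum_inner]
    _ ≤ ∑ i ∈ s, ‖p - a i‖ + ‖∑ i ∈ s, normalize (a i)‖ * ‖p‖ := by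
      gcongr
      exact real_inner_le_norm _ p

theorem norm_add_le_one_iff_two_pi_div_three_le_angle {u v : V} (hu : ‖u‖ = 1) (hv : ‖v‖ = 1) :
    ‖u + v‖ ≤ 1 ↔ 2 * π / 3 ≤ InnerProductGeometry.angle u v := by
  have norm_sq : ‖u + v‖ ^ 2 = 2 + 2 * cos (InnerProductGeometry.angle u v) := by
    rw [norm_add_sq_real, hu, hv, InnerProductGeometry.inner_eq_cos_angle_of_norm_eq_one hu hv]
    ring
  have cos_two_pi_div_three : cos (2 * π / 3) = -(1 / 2) := by
    rw [show 2 * π / 3 = π - π / 3 by ring, cos_pi_sub, cos_pi_div_three]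
  have two_pi_div_three_mem : 2 * π / 3 ∈ Set.Icc 0 π := by
    constructor <;> linarith [pi_pos]
  have angle_mem : InnerProductGeometry.angle u v ∈ Set.Icc 0 π :=
    ⟨InnerProductGeometry.angle_nonneg u v, InnerProductGeometry.angle_le_pi u v⟩
  rw [← sq_le_one_iff₀ (norm_nonneg _), norm_sq,
    ← strictAntiOn_cos.le_iff_ge angle_mem two_pi_div_three_mem, cos_two_pi_div_three]
  constructor <;> intro h <;> linarith

theorem norm_add_norm_le_of_two_pi_div_three_le_angle {a b : V}
    (h : 2 * π / 3 ≤ InnerProductGeometry.angle a b) (p : V) :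
    ‖a‖ + ‖b‖ ≤ ‖p - a‖ + ‖p - b‖ + ‖p‖ := by
  have ha : a ≠ 0 := by
    rintro rfl
    linarith [InnerProductGeometry.angle_zero_left b, pi_pos]
  have hb : b ≠ 0 := by
    rintro rfl
    linarith [InnerProductGeometry.angle_zero_right a, pi_pos]
  have norm_normalize_add_le_one : ‖normalize a + normalize b‖ ≤ 1 := by
    rwa [norm_add_le_one_iff_two_pi_div_three_le_angle (norm_normalize ha) (norm_normalize hb),
      InnerProductGeometry.angle_normalize_left, InnerProductGeometry.angle_normalize_right]
  calc
    ‖a‖ + ‖b‖ ≤ ‖p - a‖ + ‖p - b‖ + ‖normalize a + normalize b‖ * ‖p‖ := by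
      simpa [Fin.sum_univ_two] using
        sum_norm_le_sum_norm_sub_add_norm_sum_normalize_mul Finset.univ ![a, b] p
    _ ≤ ‖p - a‖ + ‖p - b‖ + ‖p‖ := by
      gcongr
      exact mul_le_of_le_one_left (norm_nonneg p) norm_normalize_add_le_one

end InnerProductSpace

theorem fermat_point_eq_vertex_of_large_angle_general {V E : Type*} [NormedAddCommGroup V]
    [InnerProductSpace ℝ V] [MetricSpace E] [NormedAddTorsor V E] {A B C : E}
    (hangle : 2 * π / 3 ≤ ∠ A C B) (P : E) :
    dist C A + dist C B ≤ dist P A + dist P B + dist P C := by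
  simpa only [vsub_sub_vsub_cancel_right, ← dist_eq_norm_vsub, dist_comm C] using
    norm_add_norm_le_of_two_pi_div_three_le_angle hangle (P -ᵥ C)

/-- If the angle of the triangle `ABC` at the vertex `C` is at least `120°`, then
`C` itself minimizes the sum of distances to `A`, `B`, `C`. -/
theorem fermat_point_eq_vertex_of_large_angle
    (A B C : EuclideanSpace ℝ (Fin 2))
    (hAB : A ≠ B) (hBC : B ≠ C) (hCA : C ≠ A)
    (hangle : 2 * π / 3 ≤ ∠ A C B) :
    ∀ P : EuclideanSpace ℝ (Fin 2),
      dist C A + dist C B ≤ dist P A + dist P B + dist P C :=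
  fermat_point_eq_vertex_of_large_angle_general hangle
end

section
/- Let A, B, C be three affinely independent points in the Euclidean plane with side lengths a = dist(B,C), b = dist(C,A), c = dist(A,B). For every point P in the interior of the triangle (i.e., P lies in the interior of the convex hull of {A, B, C}), the distances R_A = dist(P,A), R_B = dist(P,B), R_C = dist(P,C) satisfy the strict inequality R_A + R_B + R_C < max{a + b, b + c, c + a} (the Visschers–Sándor inequality). -/
open EuclideanGeometry

/-!
The sum of the distances to `A`, `B`, `C` is a convex function, and it is strictly convex because
the norm is and no line passes through all three points. Its maximum over the triangle is therefore
attained only at extreme points, that is, at vertices, and its values at `A`, `B`, `C` are `b + c`,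
`c + a` and `a + b`.
-/

section MaximumPrinciple

variable {𝕜 E β : Type*} [Field 𝕜] [LinearOrder 𝕜] [IsStrictOrderedRing 𝕜] [AddCommGroup E]
  [Module 𝕜 E] [AddCommGroup β] [LinearOrder β] [IsOrderedAddMonoid β] [Module 𝕜 β]
  [IsStrictOrderedModule 𝕜 β]

theorem exists_mem_openSegment_ne_of_notMem_extremePoints {s : Set E} {x : E} (hx : x ∈ s)
    (hx' : x ∉ s.extremePoints 𝕜) : ∃ y ∈ s, ∃ z ∈ s, y ≠ z ∧ x ∈ openSegment 𝕜 y z := by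
  rw [mem_extremePoints_iff_left] at hx'
  push Not at hx'
  obtain ⟨y, hy, z, hz, hxyz, hyx⟩ := hx' hx
  refine ⟨y, hy, z, hz, ?_, hxyz⟩
  rintro rfl
  rw [openSegment_same] at hxyz
  exact hyx hxyz.symm

theorem exists_lt_of_strictConvexOn_of_notMem_extremePoints {s t : Set E} {f : E → β} {x : E}
    (hf : StrictConvexOn 𝕜 s f) (hts : t ⊆ s) (hx : x ∈ convexHull 𝕜 t)
    (hx' : x ∉ (convexHull 𝕜 t).extremePoints 𝕜) : ∃ y ∈ t, f x < f y := by
  obtain ⟨y, hy, z, hz, hyz, hxyz⟩ := exists_mem_openSegment_ne_of_notMem_extremePoints hx hx'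
  have hull_subset : convexHull 𝕜 t ⊆ s := convexHull_min hts hf.1
  have hlt : f x < max (f y) (f z) :=
    hf.lt_on_openSegment (hull_subset hy) (hull_subset hz) hyz hxyz
  rcases lt_max_iff.1 hlt with hxy | hxz
  · obtain ⟨v, hv, hyv⟩ := hf.convexOn.exists_ge_of_mem_convexHull hts hy
    exact ⟨v, hv, hxy.trans_le hyv⟩
  · obtain ⟨v, hv, hzv⟩ := hf.convexOn.exists_ge_of_mem_convexHull hts hz
    exact ⟨v, hv, hxz.trans_le hzv⟩

end MaximumPrinciple

theorem collinear_of_forall_collinear_insert_pair {k V P : Type*} [DivisionRing k]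
    [AddCommGroup V] [Module k V] [AddTorsor V P] {s : Set P} {x y : P} (hxy : x ≠ y)
    (h : ∀ v ∈ s, Collinear k {v, x, y}) : Collinear k s := by
  have subset_line : s ⊆ line[k, x, y] := fun v hv ↦
    (h v hv).mem_affineSpan_of_mem_of_ne (by simp) (by simp) (by simp) hxy
  have collinear_line : Collinear k (line[k, x, y] : Set P) := by
    rw [Collinear, ← direction_affineSpan, AffineSubspace.affineSpan_coe, direction_affineSpan]
    exact collinear_pair k x y
  exact collinear_line.subset subset_line

section SumDist

variable {E : Type*} [NormedAddCommGroup E] [NormedSpace ℝ E] [StrictConvexSpace ℝ E]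

theorem dist_combo_lt_of_not_collinear {v x y : E} (h : ¬Collinear ℝ {v, x, y}) {a b : ℝ}
    (ha : 0 < a) (hb : 0 < b) (hab : a + b = 1) :
    dist (a • x + b • y) v < a * dist x v + b * dist y v := by
  have not_sameRay : ¬SameRay ℝ (a • (x - v)) (b • (y - v)) := by
    intro hray
    have hray' : SameRay ℝ (x -ᵥ v) (y -ᵥ v) := by
      simpa only [vsub_eq_sub, inv_smul_smul₀ ha.ne', inv_smul_smul₀ hb.ne'] using
        (hray.pos_smul_left (inv_pos.2 ha)).pos_smul_right (inv_pos.2 hb)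
    rcases wbtw_total_of_sameRay_vsub_left hray' with hvxy | hvyx
    · exact h hvxy.collinear
    · exact h (Set.pair_comm x y ▸ hvyx.collinear)
  calc
    dist (a • x + b • y) v = ‖a • (x - v) + b • (y - v)‖ := by
      rw [dist_eq_norm, smul_sub, smul_sub, sub_add_sub_comm, Convex.combo_self hab]
    _ < ‖a • (x - v)‖ + ‖b • (y - v)‖ := norm_add_lt_of_not_sameRay not_sameRay
    _ = a * dist x v + b * dist y v := by
      rw [norm_smul_of_nonneg ha.le, norm_smul_of_nonneg hb.le, dist_eq_norm, dist_eq_norm]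

theorem strictConvexOn_sum_dist {ι : Type*} {s : Finset ι} {v : ι → E}
    (hv : ¬Collinear ℝ (v '' s)) : StrictConvexOn ℝ Set.univ fun x ↦ ∑ i ∈ s, dist x (v i) := by
  refine ⟨convex_univ, fun x _ y _ hxy a b ha hb hab ↦ ?_⟩
  obtain ⟨j, hj, hjxy⟩ : ∃ j ∈ s, ¬Collinear ℝ {v j, x, y} := by
    contrapose! hv
    exact collinear_of_forall_collinear_insert_pair hxy (Set.forall_mem_image.2 hv)
  calc
    ∑ i ∈ s, dist (a • x + b • y) (v i) < ∑ i ∈ s, (a * dist x (v i) + b * dist y (v i)) :=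
      Finset.sum_lt_sum
        (fun i _ ↦ (convexOn_univ_dist (v i)).2 (Set.mem_univ x) (Set.mem_univ y) ha.le hb.le hab)
        ⟨j, hj, dist_combo_lt_of_not_collinear hjxy ha hb hab⟩
    _ = a • ∑ i ∈ s, dist x (v i) + b • ∑ i ∈ s, dist y (v i) := by
      rw [Finset.sum_add_distrib, smul_eq_mul, smul_eq_mul, Finset.mul_sum,
        Finset.mul_sum]

theorem visschers_sandor_inequality_general {A B C P : E}
    (hABC : AffineIndependent ℝ ![A, B, C])
    (hP : P ∈ convexHull ℝ {A, B, C})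
    (hP' : P ∉ (convexHull ℝ {A, B, C}).extremePoints ℝ) :
    dist P A + dist P B + dist P C <
      max (dist B C + dist C A) (max (dist C A + dist A B) (dist A B + dist B C)) := by
  have hconv : StrictConvexOn ℝ Set.univ fun x ↦ dist x A + dist x B + dist x C := by
    have hrange : ¬Collinear ℝ (![A, B, C] '' (Finset.univ : Finset (Fin 3))) := by
      rwa [Finset.coe_univ, Set.image_univ, ← affineIndependent_iff_not_collinear]
    simpa [Fin.sum_univ_three] using strictConvexOn_sum_dist hrange
  obtain ⟨Q, hQ, hlt⟩ :=
    exists_lt_of_strictConvexOn_of_notMem_extremePoints hconv (Set.subset_univ _) hP hP'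
  refine hlt.trans_le ?_
  rcases hQ with rfl | rfl | rfl
  · exact le_max_of_le_right (le_max_of_le_left (by simp [dist_comm, add_comm]))
  · exact le_max_of_le_right (le_max_of_le_right (by simp [dist_comm]))
  · exact le_max_of_le_left (by simp [dist_comm, add_comm])

end SumDist

/-- The Visschers–Sándor inequality: for any interior point `P` of the triangle `ABC`,
the sum of the distances from `P` to the vertices is strictly less than
`max {a + b, b + c, c + a}`, where `a`, `b`, `c` are the side lengths. -/
theorem visschers_sandor_inequality
    (A B C : EuclideanSpace ℝ (Fin 2))
    (hABC : AffineIndependent ℝ ![A, B, C])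
    (P : EuclideanSpace ℝ (Fin 2))
    (hP : P ∈ interior (convexHull ℝ ({A, B, C} : Set (EuclideanSpace ℝ (Fin 2))))) :
    dist P A + dist P B + dist P C <
      max (dist B C + dist C A) (max (dist C A + dist A B) (dist A B + dist B C)) := by
  have hext := Set.disjoint_left.1 (disjoint_interior_extremePoints _) hP
  exact visschers_sandor_inequality_general hABC (interior_subset hP) hext
end

section
/- Let A, B, C be three points in the Euclidean plane. Every point F that minimizes P ↦ dist(P,A) + dist(P,B) + dist(P,C) lies in the convex hull of the set {A, B, C}. -/
/-!
The nearest point of a complete convex set to an outside point `F` is strictly closer than `F` to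
every point of that set: the angle at the projection is not acute, so the opposite side is the
longest. Hence projecting `F` onto the convex hull of the given points strictly decreases the sum
of the distances to them, whatever positive weights the distances carry.
-/

open EuclideanGeometry

section

variable {V : Type*} [NormedAddCommGroup V] [InnerProductSpace ℝ V]

theorem dist_lt_dist_of_inner_vsub_vsub_nonpos {P : Type*} [MetricSpace P] [NormedAddTorsor V P]
    {x y z : P} (hxy : x ≠ y) (hinner : inner ℝ (x -ᵥ y) (z -ᵥ y) ≤ 0) :
    dist y z < dist x z := by
  have law_of_cosines : dist x z ^ 2 =
      ‖x -ᵥ y‖ ^ 2 - 2 * inner ℝ (x -ᵥ y) (z -ᵥ y) + dist y z ^ 2 := by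
    rw [dist_comm y z, dist_eq_norm_vsub V x z, dist_eq_norm_vsub V z y, ← norm_sub_sq_real,
      vsub_sub_vsub_cancel_right]
  have hpos : 0 < ‖x -ᵥ y‖ ^ 2 := pow_pos (norm_pos_iff.2 (vsub_ne_zero.2 hxy)) 2
  refine lt_of_pow_lt_pow_left₀ 2 dist_nonneg ?_
  linarith

theorem exists_mem_forall_mem_dist_lt_of_notMem {K : Set V} (hne : K.Nonempty)
    (hcomplete : IsComplete K) (hconvex : Convex ℝ K) {x : V} (hx : x ∉ K) :
    ∃ y ∈ K, ∀ z ∈ K, dist y z < dist x z := by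
  obtain ⟨y, hy, hmin⟩ := exists_norm_eq_iInf_of_complete_convex hne hcomplete hconvex x
  have hinner := (norm_eq_iInf_iff_real_inner_le_zero hconvex hy).1 hmin
  exact ⟨y, hy, fun z hz ↦
    dist_lt_dist_of_inner_vsub_vsub_nonpos (ne_of_mem_of_not_mem hy hx).symm (hinner z hz)⟩

theorem fermat_point_mem_convexHull_general {ι : Type*} {s : Finset ι} (hs : s.Nonempty)
    {w : ι → ℝ} (hw : ∀ i ∈ s, 0 < w i) (p : ι → V) {x : V}
    (hx : ∀ y, ∑ i ∈ s, w i * dist x (p i) ≤ ∑ i ∈ s, w i * dist y (p i)) :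
    x ∈ convexHull ℝ (p '' s) := by
  by_contra hmem
  have hcompact : IsCompact (convexHull ℝ (p '' s)) :=
    (s.finite_toSet.image p).isCompact_convexHull (𝕜 := ℝ)
  obtain ⟨y, -, hy⟩ := exists_mem_forall_mem_dist_lt_of_notMem
    (hs.to_set.image p).convexHull hcompact.isComplete (convex_convexHull ℝ _) hmem
  have hcloser : ∀ i ∈ s, dist y (p i) < dist x (p i) := fun i hi ↦
    hy _ (subset_convexHull ℝ _ (Set.mem_image_of_mem p hi))
  refine (hx y).not_gt (Finset.sum_lt_sum_of_nonempty hs fun i hi ↦ ?_)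
  exact mul_lt_mul_of_pos_left (hcloser i hi) (hw i hi)

end

/-- Every Fermat–Torricelli point of `A`, `B`, `C` lies in the convex hull of the
three points. -/
theorem fermat_point_mem_convexHull
    (A B C F : EuclideanSpace ℝ (Fin 2))
    (hF : ∀ P : EuclideanSpace ℝ (Fin 2),
      dist F A + dist F B + dist F C ≤ dist P A + dist P B + dist P C) :
    F ∈ convexHull ℝ ({A, B, C} : Set (EuclideanSpace ℝ (Fin 2))) := by
  have image_vertices : ![A, B, C] '' (Finset.univ : Finset (Fin 3)) = {A, B, C} := by
    rw [Finset.coe_univ, Set.image_univ, Matrix.range_cons, Matrix.range_cons_cons_empty,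
      Set.singleton_union]
  exact image_vertices ▸ fermat_point_mem_convexHull_general Finset.univ_nonempty (w := 1)
    (fun _ _ ↦ one_pos) ![A, B, C] (by simpa [Fin.sum_univ_three] using hF)
end

section
/- Let A, B, C be three affinely independent points in the Euclidean plane such that all three angles of the triangle, ∠BAC, ∠ABC and ∠BCA, are strictly less than 2π/3 (120°). Then any point F minimizing P ↦ dist(P,A) + dist(P,B) + dist(P,C) is distinct from each of the vertices: F ≠ A, F ≠ B and F ≠ C. -/
open EuclideanGeometry Real

/-!
Near the vertex `A` the function `P ↦ dist P A + dist P B + dist P C` is the sum of a cone of slope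
`1` with apex `A` and a function which is differentiable at `A`, whose gradient there is minus the
sum of the unit vectors pointing from `A` to `B` and `C`. At a local minimum the cone has to absorb
this gradient, so the sum of the two unit vectors has norm at most `1`; its squared norm is
`2 + 2 * cos (∠ B A C)`, hence `2 * π / 3 ≤ ∠ B A C`.
-/

open NormedSpace Set Filter
open scoped Topology

theorem norm_le_one_of_isLocalMin_norm_add {E : Type*} [NormedAddCommGroup E] [NormedSpace ℝ E]
    {g : E → ℝ} {g' : StrongDual ℝ E} (hg : HasFDerivAt g g' 0)
    (hmin : IsLocalMin (fun w ↦ ‖w‖ + g w) 0) : ‖g'‖ ≤ 1 := by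
  have neg_le_norm (v : E) : -g' v ≤ ‖v‖ := by
    have hline : HasDerivAt (fun t : ℝ ↦ t • v) v 0 := by
      simpa using (hasDerivAt_id (0 : ℝ)).smul_const v
    -- On the ray spanned by `v` the norm is linear, so the restricted function is differentiable.
    have hderiv : HasDerivWithinAt (fun t : ℝ ↦ t * ‖v‖ + g (t • v)) (‖v‖ + g' v) (Ici 0) 0 := by
      have hcomp : HasDerivAt (fun t : ℝ ↦ g (t • v)) (g' v) 0 :=
        HasFDerivAt.comp_hasDerivAt_of_eq 0 hg hline (zero_smul ℝ v).symm
      exact ((hasDerivAt_mul_const ‖v‖).add hcomp).hasDerivWithinAt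
    have hmin_ray : IsLocalMinOn (fun t : ℝ ↦ t * ‖v‖ + g (t • v)) (Ici 0) 0 := by
      have htendsto : Tendsto (fun t : ℝ ↦ t • v) (𝓝[≥] 0) (𝓝 0) := by
        simpa using hline.continuousAt.tendsto.mono_left nhdsWithin_le_nhds
      filter_upwards [htendsto.eventually hmin, self_mem_nhdsWithin] with t ht (ht0 : 0 ≤ t)
      simpa [norm_smul, abs_of_nonneg ht0] using ht
    have hone : (1 : ℝ) ∈ posTangentConeAt (Ici 0) 0 :=
      mem_posTangentConeAt_of_segment_subset <|
        (convex_Ici 0).segment_subset (by simp) (by simp)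
    have hnonneg := hmin_ray.hasFDerivWithinAt_nonneg hderiv.hasFDerivWithinAt hone
    simp only [ContinuousLinearMap.toSpanSingleton_apply, one_smul] at hnonneg
    linarith
  refine g'.opNorm_le_bound zero_le_one fun v ↦ ?_
  rw [one_mul, Real.norm_eq_abs, abs_le']
  exact ⟨by simpa using neg_le_norm (-v), neg_le_norm v⟩

section InnerProductSpace

variable {V : Type*} [NormedAddCommGroup V] [InnerProductSpace ℝ V]

theorem hasFDerivAt_norm {x : V} (hx : x ≠ 0) :
    HasFDerivAt (fun y : V ↦ ‖y‖) (innerSL ℝ (normalize x)) x := by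
  have hsqrt := (hasStrictFDerivAt_norm_sq x).hasFDerivAt.sqrt (by simpa using hx)
  simp only [sqrt_sq (norm_nonneg _)] at hsqrt
  convert hsqrt using 1
  rw [NormedSpace.normalize, map_smulₛₗ, conj_trivial]
  match_scalars
  field_simp

theorem norm_normalize_add_normalize_sq {u v : V} (hu : u ≠ 0) (hv : v ≠ 0) :
    ‖normalize u + normalize v‖ ^ 2 = 2 + 2 * cos (InnerProductGeometry.angle u v) := by
  have hinner : inner ℝ (normalize u) (normalize v) = cos (InnerProductGeometry.angle u v) := by
    rw [← InnerProductGeometry.angle_normalize_left, ← InnerProductGeometry.angle_normalize_right,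
      InnerProductGeometry.cos_angle, norm_normalize hu, norm_normalize hv, one_mul, div_one]
  rw [norm_add_sq_real, norm_normalize hu, norm_normalize hv, hinner]
  ring

theorem norm_normalize_add_normalize_le_one_iff {u v : V} (hu : u ≠ 0) (hv : v ≠ 0) :
    ‖normalize u + normalize v‖ ≤ 1 ↔ 2 * π / 3 ≤ InnerProductGeometry.angle u v := by
  have hcos : cos (2 * π / 3) = -(1 / 2) := by
    rw [show 2 * π / 3 = π - π / 3 by ring, cos_pi_sub, cos_pi_div_three]
  calc ‖normalize u + normalize v‖ ≤ 1
      ↔ 2 + 2 * cos (InnerProductGeometry.angle u v) ≤ 1 := by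
        rw [← sq_le_one_iff₀ (norm_nonneg _), norm_normalize_add_normalize_sq hu hv]
    _ ↔ cos (InnerProductGeometry.angle u v) ≤ cos (2 * π / 3) := by
        rw [hcos]; constructor <;> intro h <;> linarith
    _ ↔ 2 * π / 3 ≤ InnerProductGeometry.angle u v :=
        strictAntiOn_cos.le_iff_ge
          ⟨InnerProductGeometry.angle_nonneg u v, InnerProductGeometry.angle_le_pi u v⟩
          ⟨by linarith [pi_pos], by linarith [pi_pos]⟩

variable {P : Type*} [MetricSpace P] [NormedAddTorsor V P]

theorem norm_sum_normalize_vsub_le_one_of_isLocalMin {ι : Type*} {s : Finset ι} {A : P} {B : ι → P}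
    (hB : ∀ i ∈ s, B i ≠ A)
    (hmin : IsLocalMin (fun X ↦ dist X A + ∑ i ∈ s, dist X (B i)) A) :
    ‖∑ i ∈ s, normalize (B i -ᵥ A)‖ ≤ 1 := by
  have hdist (i : ι) (hi : i ∈ s) : HasFDerivAt (fun w : V ↦ ‖w + (A -ᵥ B i)‖)
      (innerSL ℝ (-normalize (B i -ᵥ A))) 0 := by
    rw [← normalize_neg, neg_vsub_eq_vsub_rev, hasFDerivAt_comp_add_right, zero_add]
    exact hasFDerivAt_norm (vsub_ne_zero.2 (hB i hi).symm)
  have hmin_zero : IsLocalMin (fun w : V ↦ ‖w‖ + ∑ i ∈ s, ‖w + (A -ᵥ B i)‖) 0 := by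
    have htendsto : Tendsto (fun w : V ↦ w +ᵥ A) (𝓝 0) (𝓝 A) :=
      Continuous.tendsto' (by fun_prop) 0 A (zero_vadd V A)
    filter_upwards [htendsto.eventually hmin] with w hw
    simpa [dist_eq_norm_vsub V, vadd_vsub_assoc] using hw
  have hle := norm_le_one_of_isLocalMin_norm_add (HasFDerivAt.fun_sum hdist) hmin_zero
  rwa [← map_sum, innerSL_apply_norm, Finset.sum_neg_distrib, norm_neg] at hle

theorem two_pi_div_three_le_angle_of_isLocalMin {A B C : P} (hBA : B ≠ A) (hCA : C ≠ A)
    (hmin : IsLocalMin (fun X ↦ dist X A + dist X B + dist X C) A) : 2 * π / 3 ≤ ∠ B A C := by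
  have hle : ‖∑ i, normalize (![B, C] i -ᵥ A)‖ ≤ 1 :=
    norm_sum_normalize_vsub_le_one_of_isLocalMin (by simp [hBA, hCA])
      (by simpa [Fin.sum_univ_two, add_assoc] using hmin)
  rw [Fin.sum_univ_two] at hle
  exact (norm_normalize_add_normalize_le_one_iff (vsub_ne_zero.2 hBA) (vsub_ne_zero.2 hCA)).1 hle

theorem fermat_point_ne_vertices_general {A B C F : P} (hAB : A ≠ B) (hAC : A ≠ C) (hBC : B ≠ C)
    (hA : ∠ B A C < 2 * π / 3) (hB : ∠ A B C < 2 * π / 3) (hC : ∠ B C A < 2 * π / 3)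
    (hF : IsLocalMin (fun X ↦ dist X A + dist X B + dist X C) F) :
    F ≠ A ∧ F ≠ B ∧ F ≠ C := by
  refine ⟨?_, ?_, ?_⟩ <;> rintro rfl
  · exact hA.not_ge (two_pi_div_three_le_angle_of_isLocalMin hAB.symm hAC.symm hF)
  · refine hB.not_ge (two_pi_div_three_le_angle_of_isLocalMin hAB hBC.symm ?_)
    simpa only [add_comm (dist _ A)] using hF
  · refine hC.not_ge (two_pi_div_three_le_angle_of_isLocalMin hBC hAC ?_)
    simpa only [add_comm, add_left_comm] using hF

end InnerProductSpace

/-- If all angles of the triangle `ABC` are strictly less than `120°`, then any point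
minimizing the sum of distances to `A`, `B`, `C` is distinct from each vertex. -/
theorem fermat_point_ne_vertices
    (A B C : EuclideanSpace ℝ (Fin 2))
    (hABC : AffineIndependent ℝ ![A, B, C])
    (hA : ∠ B A C < 2 * π / 3) (hB : ∠ A B C < 2 * π / 3) (hC : ∠ B C A < 2 * π / 3)
    (F : EuclideanSpace ℝ (Fin 2))
    (hF : ∀ P : EuclideanSpace ℝ (Fin 2),
      dist F A + dist F B + dist F C ≤ dist P A + dist P B + dist P C) :
    F ≠ A ∧ F ≠ B ∧ F ≠ C := by
  have hne {i j : Fin 3} (hij : i ≠ j) : ![A, B, C] i ≠ ![A, B, C] j := hABC.injective.ne hij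
  exact fermat_point_ne_vertices_general (hne zero_ne_one) (hne (by decide : (0 : Fin 3) ≠ 2))
    (hne (by decide : (1 : Fin 3) ≠ 2)) hA hB hC (Eventually.of_forall hF)
end

section
/- (Simpson's construction.) Let A, B, C be three affinely independent points in the Euclidean plane with all angles of triangle ABC strictly less than 2π/3, and let F be the point minimizing P ↦ dist(P,A) + dist(P,B) + dist(P,C). Let A₁ be a point with dist(A₁,B) = dist(A₁,C) = dist(B,C) that lies strictly on the opposite side of the line through B and C from A (the apex of the equilateral triangle erected externally on side BC). Then F lies on the line through A and A₁. (By symmetry, F also lies on the analogous lines BB₁ and CC₁, so the three Simpson lines are concurrent at F.) -/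
open EuclideanGeometry Real

/-!
By Ptolemy's inequality in the quadrilateral `FBA₁C`, every point satisfies `FA₁ ≤ FB + FC`, so
`AA₁` is a lower bound for the sum of distances to `A`, `B` and `C`. If no angle exceeds `120°`,
the bound is attained where the segment `AA₁` meets the circumcircle of `A₁BC` again; a minimizer
then makes the triangle inequality `AA₁ ≤ AF + FA₁` an equality and so lies on the segment `AA₁`.
If the angle at `A` exceeds `120°`, the minimizer is `A` itself: moving from `A` by a vector of
length `ε` decreases `AB + AC` by at most `ε‖u + v‖ < ε`, where `u` and `v` are the unit vectors
from `A` towards `B` and `C`.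
-/

section OrderedField

variable {R V P : Type*} [Field R] [LinearOrder R] [IsStrictOrderedRing R]
  [AddCommGroup V] [Module R V] [AddTorsor V P]

lemma exists_one_lt_add_and_vsub_eq_of_sOppSide {A B C D : P}
    (h : (affineSpan R {B, C}).SOppSide D A) :
    ∃ x y : R, 1 < x + y ∧ A -ᵥ D = x • (B -ᵥ D) + y • (C -ᵥ D) := by
  obtain ⟨p, hp, hDpA⟩ := h.exists_sbtw
  obtain ⟨r, ⟨hr₀, hr₁⟩, rfl⟩ := (sbtw_iff_mem_image_Ioo_and_ne.1 hDpA).1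
  obtain ⟨u, hu⟩ := mem_affineSpan_pair_iff_exists_lineMap_eq.1 hp
  have hp_vsub : r • (A -ᵥ D) = (1 - u) • (B -ᵥ D) + u • (C -ᵥ D) := by
    have := congrArg (· -ᵥ D) hu
    simp only [AffineMap.lineMap_apply, vadd_vsub_assoc, vsub_self, add_zero] at this
    rw [← this, ← vsub_sub_vsub_cancel_right C B D]
    module
  refine ⟨(1 - u) / r, u / r, ?_, ?_⟩
  · rwa [← add_div, sub_add_cancel, one_lt_div hr₀]
  · rw [div_eq_inv_mul, div_eq_inv_mul, mul_smul, mul_smul, ← smul_add, ← hp_vsub,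
      inv_smul_smul₀ hr₀.ne']

end OrderedField

lemma dist_le_dist_add_dist_of_equilateral {V P : Type*} [NormedAddCommGroup V]
    [InnerProductSpace ℝ V] [MetricSpace P] [NormedAddTorsor V P] {B C D : P}
    (hDB : dist D B = dist B C) (hDC : dist D C = dist B C) (Q : P) :
    dist Q D ≤ dist Q B + dist Q C := by
  rcases eq_or_ne B C with rfl | hBC
  · obtain rfl : D = B := by simpa using hDB
    exact le_add_of_nonneg_right dist_nonneg
  · have ptolemy := mul_dist_le_mul_dist_add_mul_dist Q B D C
    rw [dist_comm B D, hDB, hDC] at ptolemy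
    refine le_of_mul_le_mul_right ?_ (dist_pos.2 hBC)
    linarith

variable {V : Type*} [NormedAddCommGroup V]

/-- The vectors `b` and `c` form an equilateral triangle of side `s` with the origin. Measuring
the plane of the triangle `ABC` from the apex `A₁` by `b = B - A₁` and `c = C - A₁` turns its
metric into the quadratic form `x ^ 2 + x * y + y ^ 2`. -/
structure IsEquilateralPair (b c : V) (s : ℝ) : Prop where
  norm_left : ‖b‖ = s
  norm_right : ‖c‖ = s
  norm_sub : ‖b - c‖ = s

namespace IsEquilateralPair

variable {b c : V} {s : ℝ}

lemma symm (h : IsEquilateralPair b c s) : IsEquilateralPair c b s :=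
  ⟨h.norm_right, h.norm_left, norm_sub_rev b c ▸ h.norm_sub⟩

lemma nonneg (h : IsEquilateralPair b c s) : 0 ≤ s :=
  h.norm_left ▸ norm_nonneg b

end IsEquilateralPair

variable [InnerProductSpace ℝ V] {P : Type*} [MetricSpace P] [NormedAddTorsor V P]

lemma angle_le_two_pi_div_three_iff {x y : V} :
    InnerProductGeometry.angle x y ≤ 2 * π / 3 ↔ -(‖x‖ * ‖y‖) ≤ 2 * inner ℝ x y := by
  have cos_eq : cos (2 * π / 3) = -(1 / 2) := by
    rw [show 2 * π / 3 = π - π / 3 by ring, cos_pi_sub, cos_pi_div_three]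
  have cos_le_iff : InnerProductGeometry.angle x y ≤ 2 * π / 3 ↔
      cos (2 * π / 3) ≤ cos (InnerProductGeometry.angle x y) :=
    (strictAntiOn_cos.le_iff_ge ⟨by positivity, by linarith [pi_pos]⟩
      ⟨InnerProductGeometry.angle_nonneg x y, InnerProductGeometry.angle_le_pi x y⟩).symm
  rcases eq_or_ne x 0 with rfl | hx
  · simpa using by linarith [pi_pos]
  rcases eq_or_ne y 0 with rfl | hy
  · simpa using by linarith [pi_pos]
  have hxy : 0 < ‖x‖ * ‖y‖ := mul_pos (norm_pos_iff.2 hx) (norm_pos_iff.2 hy)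
  rw [cos_le_iff, cos_eq, InnerProductGeometry.cos_angle, le_div_iff₀ hxy]
  constructor <;> intro h <;> linarith

lemma norm_add_lt_one_of_two_pi_div_three_lt_angle {u v : V} (hu : ‖u‖ = 1) (hv : ‖v‖ = 1)
    (h : 2 * π / 3 < InnerProductGeometry.angle u v) : ‖u + v‖ < 1 := by
  have hinner := lt_of_not_ge (mt angle_le_two_pi_div_three_iff.2 h.not_ge)
  rw [hu, hv] at hinner
  rw [← sq_lt_one_iff₀ (norm_nonneg _), norm_add_sq_real, hu, hv]
  linarith

lemma norm_le_inner_inv_norm_smul_add_norm_sub (x z : V) :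
    ‖x‖ ≤ inner ℝ z (‖x‖⁻¹ • x) + ‖z - x‖ := by
  rcases eq_or_ne x 0 with rfl | hx
  · simp
  have hunit : ‖‖x‖⁻¹ • x‖ = 1 := norm_smul_inv_norm hx
  have hself : inner ℝ x (‖x‖⁻¹ • x) = ‖x‖ := by
    rw [real_inner_smul_right, real_inner_self_eq_norm_sq]
    field_simp
  have hcauchy := real_inner_le_norm (x - z) (‖x‖⁻¹ • x)
  rw [inner_sub_left, hself, hunit, mul_one, norm_sub_rev] at hcauchy
  linarith

lemma norm_add_norm_lt_of_two_pi_div_three_lt_angle {x y z : V}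
    (h : 2 * π / 3 < InnerProductGeometry.angle x y) (hz : z ≠ 0) :
    ‖x‖ + ‖y‖ < ‖z‖ + ‖z - x‖ + ‖z - y‖ := by
  have hobtuse : π / 2 < InnerProductGeometry.angle x y := by linarith [pi_pos]
  have hx : x ≠ 0 := by
    rintro rfl
    simp at hobtuse
  have hy : y ≠ 0 := by
    rintro rfl
    simp at hobtuse
  have hunit : ‖‖x‖⁻¹ • x + ‖y‖⁻¹ • y‖ < 1 :=
    norm_add_lt_one_of_two_pi_div_three_lt_angle (norm_smul_inv_norm hx) (norm_smul_inv_norm hy)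
      (by simpa [hx, hy, InnerProductGeometry.angle_smul_left_of_pos,
        InnerProductGeometry.angle_smul_right_of_pos] using h)
  have hz_inner := real_inner_le_norm z (‖x‖⁻¹ • x + ‖y‖⁻¹ • y)
  rw [inner_add_right] at hz_inner
  have hz_lt := mul_lt_of_lt_one_right (norm_pos_iff.2 hz) hunit
  linarith [norm_le_inner_inv_norm_smul_add_norm_sub x z,
    norm_le_inner_inv_norm_smul_add_norm_sub y z]

lemma dist_add_dist_lt_of_two_pi_div_three_lt_angle {A B C Q : P}
    (h : 2 * π / 3 < ∠ B A C) (hQ : Q ≠ A) :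
    dist A B + dist A C < dist Q A + dist Q B + dist Q C := by
  simpa only [vsub_sub_vsub_cancel_right, ← dist_eq_norm_vsub, dist_comm _ A] using
    norm_add_norm_lt_of_two_pi_div_three_lt_angle h (vsub_ne_zero.2 hQ)

namespace IsEquilateralPair

variable {b c : V} {s : ℝ}

lemma inner_eq (h : IsEquilateralPair b c s) : inner ℝ b c = s ^ 2 / 2 := by
  have := norm_sub_sq_real b c
  rw [h.norm_sub, h.norm_left, h.norm_right] at this
  linarith

lemma inner_smul_add_smul (h : IsEquilateralPair b c s) (i j k l : ℝ) :
    inner ℝ (i • b + j • c) (k • b + l • c) =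
      s ^ 2 * (i * k + j * l + (i * l + j * k) / 2) := by
  simp only [inner_add_left, inner_add_right, real_inner_smul_left, real_inner_smul_right,
    real_inner_self_eq_norm_sq, h.norm_left, h.norm_right, h.inner_eq, h.symm.inner_eq]
  ring

lemma norm_smul_add_smul_sq (h : IsEquilateralPair b c s) (i j : ℝ) :
    ‖i • b + j • c‖ ^ 2 = s ^ 2 * (i ^ 2 + i * j + j ^ 2) := by
  rw [← real_inner_self_eq_norm_sq, h.inner_smul_add_smul]
  ring

lemma norm_smul_add_smul_of_sq_add_mul_add_sq_eq_one (h : IsEquilateralPair b c s) {i j : ℝ}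
    (hij : i ^ 2 + i * j + j ^ 2 = 1) : ‖i • b + j • c‖ = s := by
  rw [← sq_eq_sq₀ (norm_nonneg _) h.nonneg, h.norm_smul_add_smul_sq, hij, mul_one]

lemma nonneg_of_angle_le (h : IsEquilateralPair b c s) (hs : 0 < s) {x y : ℝ}
    (hxy : 1 < x + y)
    (hangle : InnerProductGeometry.angle (x • b + y • c - b) (c - b) ≤ 2 * π / 3) : 0 ≤ y := by
  rw [angle_le_two_pi_div_three_iff, h.symm.norm_sub,
    show x • b + y • c - b = (x - 1) • b + y • c by module,
    show c - b = (-1 : ℝ) • b + (1 : ℝ) • c by module, h.inner_smul_add_smul] at hangle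
  by_contra! hy
  have hnorm : s * (x - 1 - y) ≤ ‖(x - 1) • b + y • c‖ := by
    refine le_of_mul_le_mul_right ?_ hs
    linarith
  have hsq := pow_le_pow_left₀ (mul_nonneg hs.le (by linarith)) hnorm 2
  rw [h.norm_smul_add_smul_sq, mul_pow] at hsq
  have := le_of_mul_le_mul_left hsq (by positivity)
  linarith [mul_pos (show 0 < x - 1 by linarith) (neg_pos.2 hy)]

-- The conclusion says that `x • b + y • c` is not inside the circumcircle of `0`, `b` and `c`.
lemma add_le_of_angle_le (h : IsEquilateralPair b c s) (hs : 0 < s) {x y : ℝ}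
    (hxy : 1 < x + y)
    (hangle : InnerProductGeometry.angle (b - (x • b + y • c)) (c - (x • b + y • c)) ≤
      2 * π / 3) :
    x + y ≤ x ^ 2 + x * y + y ^ 2 := by
  rw [angle_le_two_pi_div_three_iff,
    show b - (x • b + y • c) = (1 - x) • b + (-y) • c by module,
    show c - (x • b + y • c) = (-x) • b + (1 - y) • c by module,
    h.inner_smul_add_smul] at hangle
  by_contra! hlt
  set q := x ^ 2 + x * y + y ^ 2 with hq
  have hnorm : s ^ 2 * (3 * (x + y) - 1 - 2 * q) ≤
      ‖(1 - x) • b + (-y) • c‖ * ‖(-x) • b + (1 - y) • c‖ := by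
    rw [hq]
    linarith
  have hsq := pow_le_pow_left₀ (mul_nonneg (sq_nonneg s) (by linarith)) hnorm 2
  rw [mul_pow, mul_pow, h.norm_smul_add_smul_sq, h.norm_smul_add_smul_sq, mul_mul_mul_comm,
    ← sq] at hsq
  have hle := le_of_mul_le_mul_left hsq (by positivity)
  have hpos : 0 < (x + y - q) * (2 * (x + y) - q - 1) := mul_pos (by linarith) (by linarith)
  have hdiff : (3 * (x + y) - 1 - 2 * q) ^ 2 -
      ((1 - x) ^ 2 + (1 - x) * -y + (-y) ^ 2) * ((-x) ^ 2 + -x * (1 - y) + (1 - y) ^ 2) =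
      3 * ((x + y - q) * (2 * (x + y) - q - 1)) := by
    rw [hq]
    ring
  linarith only [hle, hpos, hdiff]

lemma norm_add_smul_sub_left (h : IsEquilateralPair b c s) {i j : ℝ} (hj : 0 ≤ j)
    (hij : i ^ 2 + i * j + j ^ 2 = 1) :
    ‖(i + j) • (i • b + j • c) - b‖ = j * s := by
  -- `(-j) • b + (i + j) • c` is the image of `i • b + j • c` under the rotation taking `b` to `c`.
  have hrot : (i + j) • (i • b + j • c) - b = j • ((-j) • b + (i + j) • c) := by
    match_scalars
    · linear_combination hij
    · ring
  rw [hrot, norm_smul, norm_of_nonneg hj,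
    h.norm_smul_add_smul_of_sq_add_mul_add_sq_eq_one (by linear_combination hij)]

lemma exists_norm_sub_add_norm_sub_add_norm_sub_eq (h : IsEquilateralPair b c s) {x y : ℝ}
    (hx : 0 ≤ x) (hy : 0 ≤ y) (hxy : 0 < x + y) (hle : x + y ≤ x ^ 2 + x * y + y ^ 2) :
    ∃ z : V, ‖z - (x • b + y • c)‖ + ‖z - b‖ + ‖z - c‖ = ‖x • b + y • c‖ := by
  set w := √(x ^ 2 + x * y + y ^ 2)
  have hw : 0 < w := sqrt_pos.2 (hxy.trans_le hle)
  have hw_sq : w ^ 2 = x ^ 2 + x * y + y ^ 2 := sq_sqrt (hxy.trans_le hle).le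
  have hw_add_le : x / w + y / w ≤ w := by
    rw [← add_div, div_le_iff₀ hw, ← sq, hw_sq]
    exact hle
  have hunit : (x / w) ^ 2 + x / w * (y / w) + (y / w) ^ 2 = 1 := by
    field_simp
    rw [hw_sq]
    ring
  set e := (x / w) • b + (y / w) • c with he
  have he_norm : ‖e‖ = s := h.norm_smul_add_smul_of_sq_add_mul_add_sq_eq_one hunit
  have hwe : x • b + y • c = w • e := by
    rw [he, smul_add, smul_smul, smul_smul, mul_div_cancel₀ x hw.ne', mul_div_cancel₀ y hw.ne']
  refine ⟨(x / w + y / w) • e, ?_⟩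
  have hb : ‖(x / w + y / w) • e - b‖ = y / w * s :=
    h.norm_add_smul_sub_left (by positivity) hunit
  have hc : ‖(x / w + y / w) • e - c‖ = x / w * s := by
    rw [he, add_comm (x / w), add_comm ((x / w) • b)]
    exact h.symm.norm_add_smul_sub_left (by positivity) (by linear_combination hunit)
  rw [hb, hc, hwe, ← sub_smul, norm_smul, norm_smul, he_norm, norm_of_nonneg hw.le,
    norm_of_nonpos (sub_nonpos.2 hw_add_le)]
  ring

end IsEquilateralPair

lemma exists_dist_add_dist_add_dist_eq_dist_apex {A B C D : P}
    (hA : ∠ B A C ≤ 2 * π / 3) (hB : ∠ A B C ≤ 2 * π / 3) (hC : ∠ B C A ≤ 2 * π / 3)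
    (hDB : dist D B = dist B C) (hDC : dist D C = dist B C)
    (hside : (affineSpan ℝ {B, C}).SOppSide D A) :
    ∃ T : P, dist T A + dist T B + dist T C = dist A D := by
  have hBC : 0 < dist B C := by
    rw [dist_pos]
    rintro rfl
    obtain rfl : D = B := by simpa using hDB
    exact hside.left_notMem (left_mem_affineSpan_pair ℝ _ _)
  have hpair : IsEquilateralPair (B -ᵥ D) (C -ᵥ D) (dist B C) :=
    ⟨by rw [← dist_eq_norm_vsub, dist_comm, hDB], by rw [← dist_eq_norm_vsub, dist_comm, hDC],
      by rw [vsub_sub_vsub_cancel_right, ← dist_eq_norm_vsub]⟩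
  obtain ⟨x, y, hxy, hAD⟩ := exists_one_lt_add_and_vsub_eq_of_sOppSide hside
  have hy : 0 ≤ y := hpair.nonneg_of_angle_le hBC hxy <| by
    rwa [← hAD, vsub_sub_vsub_cancel_right, vsub_sub_vsub_cancel_right]
  have hx : 0 ≤ x := hpair.symm.nonneg_of_angle_le hBC (add_comm x y ▸ hxy) <| by
    rwa [add_comm, ← hAD, vsub_sub_vsub_cancel_right, vsub_sub_vsub_cancel_right,
      InnerProductGeometry.angle_comm]
  have hle : x + y ≤ x ^ 2 + x * y + y ^ 2 := hpair.add_le_of_angle_le hBC hxy <| by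
    rwa [← hAD, vsub_sub_vsub_cancel_right, vsub_sub_vsub_cancel_right]
  obtain ⟨z, hz⟩ := hpair.exists_norm_sub_add_norm_sub_add_norm_sub_eq hx hy (by linarith) hle
  refine ⟨z +ᵥ D, ?_⟩
  simpa only [← hAD, dist_eq_norm_vsub, vadd_vsub_eq_sub_vsub] using hz

theorem fermat_point_mem_simpson_line_general {A B C F A₁ : P}
    (hB : ∠ A B C ≤ 2 * π / 3) (hC : ∠ B C A ≤ 2 * π / 3)
    (hF : ∀ Q : P, dist F A + dist F B + dist F C ≤ dist Q A + dist Q B + dist Q C)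
    (hA₁B : dist A₁ B = dist B C) (hA₁C : dist A₁ C = dist B C)
    (hside : (affineSpan ℝ {B, C}).SOppSide A₁ A) : F ∈ affineSpan ℝ {A, A₁} := by
  rcases le_or_gt (∠ B A C) (2 * π / 3) with hA | hA
  · obtain ⟨T, hT⟩ := exists_dist_add_dist_add_dist_eq_dist_apex hA hB hC hA₁B hA₁C hside
    have hFA₁ : dist F A₁ ≤ dist F B + dist F C :=
      dist_le_dist_add_dist_of_equilateral hA₁B hA₁C F
    have hAFA₁ : dist A F + dist F A₁ = dist A A₁ :=
      le_antisymm (by linarith [hF T, dist_comm A F]) (dist_triangle A F A₁)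
    exact (dist_add_dist_eq_iff.1 hAFA₁).mem_affineSpan
  · obtain rfl : F = A := by
      by_contra hFA
      have hlt := dist_add_dist_lt_of_two_pi_div_three_lt_angle hA hFA
      linarith [hF A, dist_self A]
    exact left_mem_affineSpan_pair ℝ F A₁

/-- Simpson's construction: if all angles of the triangle `ABC` are less than `120°`,
`F` is the Fermat–Torricelli point, and `A₁` is the apex of the equilateral triangle
erected externally on the side `BC`, then `F` lies on the Simpson line `AA₁`. -/
theorem fermat_point_mem_simpson_line
    (A B C F A₁ : EuclideanSpace ℝ (Fin 2))
    (hABC : AffineIndependent ℝ ![A, B, C])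
    (hA : ∠ B A C < 2 * π / 3) (hB : ∠ A B C < 2 * π / 3) (hC : ∠ B C A < 2 * π / 3)
    (hF : ∀ P : EuclideanSpace ℝ (Fin 2),
      dist F A + dist F B + dist F C ≤ dist P A + dist P B + dist P C)
    (hA₁B : dist A₁ B = dist B C) (hA₁C : dist A₁ C = dist B C)
    (hside : (affineSpan ℝ ({B, C} : Set (EuclideanSpace ℝ (Fin 2)))).SOppSide A₁ A) :
    F ∈ affineSpan ℝ ({A, A₁} : Set (EuclideanSpace ℝ (Fin 2))) :=
  fermat_point_mem_simpson_line_general hB.le hC.le hF hA₁B hA₁C hside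
end

section
/- (Torricelli's construction.) Let A, B, C be three affinely independent points in the Euclidean plane, and let A₁, B₁, C₁ be the apexes of the equilateral triangles erected externally on the sides BC, CA, AB respectively, i.e. dist(A₁,B) = dist(A₁,C) = dist(B,C) with A₁ strictly on the opposite side of line BC from A, and analogously for B₁ and C₁. Then the three circumcircles of the triangles A₁BC, B₁CA and C₁AB have a common point: there exists a point P lying on the circumsphere of each of these three triangles. -/
open EuclideanGeometry

/-!
Let `O_A`, `O_B`, `O_C` be the centres of the circles erected on `BC`, `CA`, `AB`.  The circles
about `O_B` and `O_C` meet at `A`, and the line `AA₁` is their radical axis.  It meets the circle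
about `O_A` at `A₁`, and the power of `A` with respect to that circle equals both
`2⟪A₁ - A, O_B - A⟫` and `2⟪A₁ - A, O_C - A⟫`.  Hence the second intersections of `AA₁` with the
three circles coincide.  The powers and inner products are computed from the expressions of the
apexes and centres in terms of a quarter-turn of the plane `ABC`.
-/

open scoped RealInnerProductSpace

section QuarterTurn

variable {V : Type*} [NormedAddCommGroup V] [InnerProductSpace ℝ V] {u v x y : V}

/-- The area of the parallelogram spanned by `u` and `v`, as the square root of their Gram
determinant. -/
noncomputable def parallelogramArea (u v : V) : ℝ :=
  √(⟪u, u⟫ * ⟪v, v⟫ - ⟪u, v⟫ ^ 2)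

lemma parallelogramArea_sq (u v : V) :
    parallelogramArea u v ^ 2 = ⟪u, u⟫ * ⟪v, v⟫ - ⟪u, v⟫ ^ 2 :=
  Real.sq_sqrt (by linarith [real_inner_mul_inner_self_le u v])

lemma parallelogramArea_pos (h : LinearIndependent ℝ ![u, v]) : 0 < parallelogramArea u v := by
  have hdet := (Matrix.posDef_gram_of_linearIndependent h).det_pos
  simp only [Matrix.det_fin_two, Matrix.gram_apply, Matrix.cons_val_zero, Matrix.cons_val_one,
    real_inner_comm u v] at hdet
  exact Real.sqrt_pos.2 (by linarith)

lemma parallelogramArea_sub_neg (u v : V) :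
    parallelogramArea (v - u) (-u) = parallelogramArea u v := by
  unfold parallelogramArea
  congr 1
  simp only [inner_sub_left, inner_sub_right, inner_neg_left, inner_neg_right, real_inner_comm u v]
  ring

/-- The endomorphism of `V` that rotates the plane spanned by linearly independent vectors `u`
and `v` by a right angle, in the direction from `u` to `v`, and kills its orthogonal complement.
It is the bivector `u ∧ v` divided by the area; for linearly dependent `u` and `v` it is `0`. -/
noncomputable def quarterTurn (u v : V) : V →ₗ[ℝ] V :=
  (parallelogramArea u v)⁻¹ • ((innerₛₗ ℝ u).smulRight v - (innerₛₗ ℝ v).smulRight u)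

lemma quarterTurn_apply (u v x : V) :
    quarterTurn u v x = (parallelogramArea u v)⁻¹ • (⟪u, x⟫ • v - ⟪v, x⟫ • u) := rfl

lemma quarterTurn_sub_neg (u v : V) : quarterTurn (v - u) (-u) = quarterTurn u v := by
  ext x
  simp only [quarterTurn_apply, parallelogramArea_sub_neg, inner_sub_left, inner_neg_left]
  module

lemma inner_quarterTurn_left (u v x y : V) :
    ⟪quarterTurn u v x, y⟫ = -⟪x, quarterTurn u v y⟫ := by
  simp only [quarterTurn_apply, inner_sub_left, inner_sub_right, real_inner_smul_left,
    real_inner_smul_right, real_inner_comm x]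
  ring

lemma inner_quarterTurn_self (u v x : V) : ⟪quarterTurn u v x, x⟫ = 0 := by
  linarith [inner_quarterTurn_left u v x x, real_inner_comm x (quarterTurn u v x)]

lemma inner_quarterTurn_fst_snd (u v : V) :
    ⟪quarterTurn u v u, v⟫ = parallelogramArea u v := by
  have hsq := parallelogramArea_sq u v
  simp only [quarterTurn_apply, inner_sub_left, real_inner_smul_left, real_inner_comm u v]
  rw [← pow_two ⟪u, v⟫, ← hsq, pow_two, ← mul_assoc, inv_mul_mul_self]

lemma inner_quarterTurn_snd_fst (u v : V) :
    ⟪quarterTurn u v v, u⟫ = -parallelogramArea u v := by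
  rw [inner_quarterTurn_left, real_inner_comm, inner_quarterTurn_fst_snd]

lemma quarterTurn_quarterTurn (h : LinearIndependent ℝ ![u, v])
    (hx : x ∈ Submodule.span ℝ {u, v}) : quarterTurn u v (quarterTurn u v x) = -x := by
  have hpos := parallelogramArea_pos h
  have hleft : quarterTurn u v (quarterTurn u v u) = -u := by
    rw [quarterTurn_apply u v (quarterTurn u v u), real_inner_comm, inner_quarterTurn_self,
      real_inner_comm, inner_quarterTurn_fst_snd, zero_smul, zero_sub, smul_neg,
      inv_smul_smul₀ hpos.ne']
  have hright : quarterTurn u v (quarterTurn u v v) = -v := by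
    rw [quarterTurn_apply u v (quarterTurn u v v), real_inner_comm, inner_quarterTurn_snd_fst,
      real_inner_comm, inner_quarterTurn_self, zero_smul, sub_zero, neg_smul, smul_neg,
      inv_smul_smul₀ hpos.ne']
  obtain ⟨a, b, rfl⟩ := Submodule.mem_span_pair.1 hx
  simp only [map_add, map_smul, hleft, hright]
  module

lemma inner_quarterTurn_quarterTurn (h : LinearIndependent ℝ ![u, v]) (x : V)
    (hy : y ∈ Submodule.span ℝ {u, v}) : ⟪quarterTurn u v x, quarterTurn u v y⟫ = ⟪x, y⟫ := by
  rw [inner_quarterTurn_left, quarterTurn_quarterTurn h hy, inner_neg_right, neg_neg]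

lemma norm_quarterTurn (h : LinearIndependent ℝ ![u, v]) (hx : x ∈ Submodule.span ℝ {u, v}) :
    ‖quarterTurn u v x‖ = ‖x‖ := by
  rw [norm_eq_sqrt_real_inner, inner_quarterTurn_quarterTurn h x hx, ← norm_eq_sqrt_real_inner]

lemma inner_sub_smul_quarterTurn (h : LinearIndependent ℝ ![u, v]) (a b c : V) {e : V}
    (he : e ∈ Submodule.span ℝ {u, v}) (r s : ℝ) :
    ⟪a - r • quarterTurn u v b, c - s • quarterTurn u v e⟫ =
      ⟪a, c⟫ + s * ⟪quarterTurn u v a, e⟫ - r * ⟪quarterTurn u v b, c⟫ + r * s * ⟪b, e⟫ := by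
  rw [← inner_quarterTurn_quarterTurn h b he, inner_quarterTurn_left u v a]
  simp only [inner_sub_left, inner_sub_right, real_inner_smul_left, real_inner_smul_right]
  ring

lemma inner_self_smul_eq_add_quarterTurn (h : LinearIndependent ℝ ![u, v])
    (hx : x ∈ Submodule.span ℝ {u, v}) :
    ⟪u, u⟫ • x = ⟪u, x⟫ • u + ⟪quarterTurn u v u, x⟫ • quarterTurn u v u := by
  obtain ⟨a, b, rfl⟩ := Submodule.mem_span_pair.1 hx
  have hturn : parallelogramArea u v • quarterTurn u v u = ⟪u, u⟫ • v - ⟪u, v⟫ • u := by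
    rw [quarterTurn_apply, smul_inv_smul₀ (parallelogramArea_pos h).ne', real_inner_comm u v]
  simp only [inner_add_right, real_inner_smul_right, inner_quarterTurn_self,
    inner_quarterTurn_fst_snd, mul_zero, zero_add, mul_smul, hturn]
  module

end QuarterTurn

section Affine

variable {R V P : Type*} [Field R] [AddCommGroup V] [Module R V] [AddTorsor V P]

lemma mem_affineSpan_insert_of_sOppSide [LinearOrder R] [IsStrictOrderedRing R]
    {s : AffineSubspace R P} {p q : P} (h : s.SOppSide p q) :
    p ∈ affineSpan R (insert q (s : Set P)) := by
  obtain ⟨r, hr, hprq⟩ := AffineSubspace.wOppSide_iff_exists_wbtw.1 h.wOppSide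
  have hqr : q ≠ r := fun e => h.right_notMem (e ▸ hr)
  have hsub : {q, r} ⊆ insert q (s : Set P) :=
    Set.insert_subset_insert (Set.singleton_subset_iff.2 hr)
  exact affineSpan_mono R hsub (hprq.left_mem_affineSpan_of_right_ne hqr)

lemma linearIndependent_vsub_of_notMem_line {Y Z W : P} (hYZ : Y ≠ Z) (hW : W ∉ line[R, Y, Z]) :
    LinearIndependent R ![Z -ᵥ Y, W -ᵥ Y] := by
  rw [LinearIndependent.pair_iff' (vsub_ne_zero.2 hYZ.symm)]
  intro a ha
  refine hW (mem_affineSpan_pair_iff_exists_lineMap_eq.2 ⟨a, ?_⟩)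
  rw [AffineMap.lineMap_apply, ha, vsub_vadd]

end Affine

lemma exists_sphere_mem_of_cospherical {P : Type*} [MetricSpace P] {a b c d : P}
    (h : Cospherical {a, b, c, d}) : ∃ s : Sphere P, a ∈ s ∧ b ∈ s ∧ c ∈ s ∧ d ∈ s := by
  simpa only [Set.insert_subset_iff, Set.singleton_subset_iff, Metric.mem_sphere, mem_sphere]
    using cospherical_iff_exists_sphere.1 h

section EuclideanAffine

variable {V P : Type*} [NormedAddCommGroup V] [InnerProductSpace ℝ V] [MetricSpace P]
  [NormedAddTorsor V P]

lemma quarterTurn_vsub_rotate (A B C : P) :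
    quarterTurn (C -ᵥ B) (A -ᵥ B) = quarterTurn (B -ᵥ A) (C -ᵥ A) := by
  rw [← quarterTurn_sub_neg (B -ᵥ A), vsub_sub_vsub_cancel_right, neg_vsub_eq_vsub_rev]

lemma lineMap_mem_sphere {s : Sphere P} {p q : P} {t : ℝ} (hp : p ∈ s)
    (ht : t * ⟪q -ᵥ p, q -ᵥ p⟫ = 2 * ⟪q -ᵥ p, s.center -ᵥ p⟫) :
    AffineMap.lineMap p q t ∈ s := by
  rcases eq_or_ne q p with rfl | hqp
  · simpa using hp
  have hne : ⟪q -ᵥ p, q -ᵥ p⟫ ≠ 0 := inner_self_ne_zero.2 (vsub_ne_zero.2 hqp)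
  have ht' : t = -2 * ⟪q -ᵥ p, p -ᵥ s.center⟫ / ⟪q -ᵥ p, q -ᵥ p⟫ := by
    rw [eq_div_iff hne, ht, ← neg_vsub_eq_vsub_rev s.center p, inner_neg_right]
    ring
  rw [ht', ← Sphere.secondInter_eq_lineMap, Sphere.secondInter_mem]
  exact hp

lemma lineMap_mem_sphere_of_right_mem {s : Sphere P} {p q : P} {t : ℝ} (hq : q ∈ s)
    (ht : 2 * ⟪q -ᵥ p, s.center -ᵥ p⟫ = (1 + t) * ⟪q -ᵥ p, q -ᵥ p⟫) :
    AffineMap.lineMap p q t ∈ s := by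
  rw [← AffineMap.lineMap_apply_one_sub]
  refine lineMap_mem_sphere hq ?_
  rw [← vsub_sub_vsub_cancel_right s.center q p, ← neg_vsub_eq_vsub_rev q p]
  simp only [inner_neg_left, inner_neg_right, inner_sub_right]
  linarith

lemma concyclic_of_subset_sphere_of_subset_affineSpan_triple {s : Sphere P} {ps : Set P} {a b c : P}
    (hs : ps ⊆ s) (hps : ps ⊆ affineSpan ℝ {a, b, c}) : Concyclic ps where
  Cospherical := cospherical_iff_exists_sphere.2 ⟨s, hs⟩
  Coplanar := by
    have hspan : Coplanar ℝ (affineSpan ℝ {a, b, c} : Set P) := by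
      rw [Coplanar, ← direction_affineSpan, AffineSubspace.affineSpan_coe, direction_affineSpan]
      exact coplanar_triple ℝ a b c
    exact hspan.subset hps

end EuclideanAffine

section ErectedTriangles

variable {V P : Type*} [NormedAddCommGroup V] [InnerProductSpace ℝ V] [MetricSpace P]
  [NormedAddTorsor V P] {A B C W Y Z p q : P}

/-- `IsOuterApex W Y Z p` says that `p` is the apex of the equilateral triangle erected on the
side `YZ` of the triangle `WYZ`, externally.  The first vertex is the one opposite to the side. -/
structure IsOuterApex (W Y Z p : P) : Prop where
  dist_left : dist p Y = dist Y Z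
  dist_right : dist p Z = dist Y Z
  sOppSide : line[ℝ, Y, Z].SOppSide p W

/-- The explicit apex of the external equilateral triangle on the side `YZ` of `WYZ`.  The sign
is negative because the quarter-turn from `Z - Y` towards `W - Y` points into the triangle. -/
noncomputable def outerApex (W Y Z : P) : P :=
  -(√3 / 2) • quarterTurn (Z -ᵥ Y) (W -ᵥ Y) (Z -ᵥ Y) +ᵥ midpoint ℝ Y Z

/-- The circumcircle of the external equilateral triangle on the side `YZ` of `WYZ`, encoded as
the sphere of `P` with the same centre and radius. -/
noncomputable def outerCircle (W Y Z : P) : Sphere P where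
  center := -(√3 / 6) • quarterTurn (Z -ᵥ Y) (W -ᵥ Y) (Z -ᵥ Y) +ᵥ midpoint ℝ Y Z
  radius := √3 / 3 * dist Y Z

lemma outerApex_vsub (W Y Z X : P) :
    outerApex W Y Z -ᵥ X = (1 / 2 : ℝ) • ((Y -ᵥ X) + (Z -ᵥ X)) -
      (√3 / 2) • quarterTurn (Z -ᵥ Y) (W -ᵥ Y) (Z -ᵥ Y) := by
  rw [outerApex, vadd_vsub_assoc, midpoint_vsub, invOf_eq_inv]
  module

lemma outerCircle_center_vsub (W Y Z X : P) :
    (outerCircle W Y Z).center -ᵥ X = (1 / 2 : ℝ) • ((Y -ᵥ X) + (Z -ᵥ X)) -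
      (√3 / 6) • quarterTurn (Z -ᵥ Y) (W -ᵥ Y) (Z -ᵥ Y) := by
  rw [outerCircle, vadd_vsub_assoc, midpoint_vsub, invOf_eq_inv]
  module

lemma norm_half_smul_sub_sqrt_three_smul {a b : V} (hab : ⟪a, b⟫ = 0) (hn : ‖b‖ = ‖a‖) :
    ‖(1 / 2 : ℝ) • a - (√3 / 6) • b‖ = √3 / 3 * ‖a‖ := by
  have h3 : √3 ^ 2 = (3 : ℝ) := Real.sq_sqrt (by norm_num)
  rw [← sq_eq_sq₀ (norm_nonneg _) (by positivity), norm_sub_sq_real, real_inner_smul_left,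
    real_inner_smul_right, hab, norm_smul, norm_smul, hn, Real.norm_of_nonneg (by positivity),
    Real.norm_of_nonneg (by positivity)]
  linear_combination (-1 / 12 * ‖a‖ ^ 2) * h3

lemma left_mem_outerCircle (h : LinearIndependent ℝ ![Z -ᵥ Y, W -ᵥ Y]) :
    Y ∈ outerCircle W Y Z := by
  rw [mem_sphere, dist_comm, dist_eq_norm_vsub V, outerCircle_center_vsub, vsub_self, zero_add,
    norm_half_smul_sub_sqrt_three_smul]
  · rw [outerCircle, dist_comm Y, dist_eq_norm_vsub V]
  · rw [real_inner_comm, inner_quarterTurn_self]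
  · exact norm_quarterTurn h (Submodule.subset_span (by simp))

lemma right_mem_outerCircle (h : LinearIndependent ℝ ![Z -ᵥ Y, W -ᵥ Y]) :
    Z ∈ outerCircle W Y Z := by
  rw [mem_sphere, dist_comm, dist_eq_norm_vsub V, outerCircle_center_vsub, vsub_self, add_zero,
    norm_half_smul_sub_sqrt_three_smul]
  · rw [outerCircle, dist_eq_norm_vsub V]
  · rw [real_inner_comm, ← neg_vsub_eq_vsub_rev Z Y, inner_neg_right, inner_quarterTurn_self,
      neg_zero]
  · rw [norm_quarterTurn h (Submodule.subset_span (by simp)), ← dist_eq_norm_vsub V,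
      ← dist_eq_norm_vsub V, dist_comm]

lemma outerApex_mem_outerCircle (h : LinearIndependent ℝ ![Z -ᵥ Y, W -ᵥ Y]) :
    outerApex W Y Z ∈ outerCircle W Y Z := by
  have hvsub : outerApex W Y Z -ᵥ (outerCircle W Y Z).center =
      -(√3 / 3) • quarterTurn (Z -ᵥ Y) (W -ᵥ Y) (Z -ᵥ Y) := by
    rw [outerApex, outerCircle, vadd_vsub_vadd_cancel_right]
    module
  rw [mem_sphere, dist_eq_norm_vsub V, hvsub, norm_smul, norm_neg,
    Real.norm_of_nonneg (by positivity), norm_quarterTurn h (Submodule.subset_span (by simp)),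
    ← dist_eq_norm_vsub V, dist_comm, outerCircle]

namespace IsOuterApex

lemma linearIndependent (h : IsOuterApex W Y Z p) :
    LinearIndependent ℝ ![Z -ᵥ Y, W -ᵥ Y] := by
  refine linearIndependent_vsub_of_notMem_line (fun hYZ => ?_) h.sOppSide.right_notMem
  have hpY : p = Y := dist_eq_zero.1 (by rw [h.dist_left, hYZ, dist_self])
  exact h.sOppSide.left_notMem (hpY ▸ left_mem_affineSpan_pair ℝ Y Z)

lemma exists_vsub_eq (h : IsOuterApex W Y Z p) :
    ∃ m t : ℝ, t < 0 ∧ p -ᵥ Y = m • (Z -ᵥ Y) + t • (W -ᵥ Y) := by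
  have hp : p ∈ {x | line[ℝ, Y, Z].SOppSide W x} := h.sOppSide.symm
  rw [AffineSubspace.setOfPred_sOppSide_eq_image2 h.sOppSide.right_notMem
    (left_mem_affineSpan_pair ℝ Y Z)] at hp
  obtain ⟨t, ht, q, hq, rfl⟩ := hp
  obtain ⟨m, rfl⟩ := mem_affineSpan_pair_iff_exists_lineMap_eq.1 hq
  exact ⟨m, t, ht, by rw [vadd_vsub_assoc, AffineMap.lineMap_vsub_left, add_comm]⟩

lemma vsub_mem_span (h : IsOuterApex W Y Z p) :
    p -ᵥ Y ∈ Submodule.span ℝ {Z -ᵥ Y, W -ᵥ Y} := by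
  obtain ⟨m, t, -, hmt⟩ := h.exists_vsub_eq
  exact Submodule.mem_span_pair.2 ⟨m, t, hmt.symm⟩

lemma inner_quarterTurn_vsub_neg (h : IsOuterApex W Y Z p) :
    ⟪quarterTurn (Z -ᵥ Y) (W -ᵥ Y) (Z -ᵥ Y), p -ᵥ Y⟫ < 0 := by
  obtain ⟨m, t, ht, hmt⟩ := h.exists_vsub_eq
  rw [hmt, inner_add_right, real_inner_smul_right, real_inner_smul_right, inner_quarterTurn_self,
    inner_quarterTurn_fst_snd, mul_zero, zero_add]
  exact mul_neg_of_neg_of_pos ht (parallelogramArea_pos h.linearIndependent)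

lemma inner_vsub_self (h : IsOuterApex W Y Z p) :
    ⟪p -ᵥ Y, p -ᵥ Y⟫ = ⟪Z -ᵥ Y, Z -ᵥ Y⟫ := by
  rw [real_inner_self_eq_norm_sq, real_inner_self_eq_norm_sq, ← dist_eq_norm_vsub V,
    ← dist_eq_norm_vsub V, h.dist_left, dist_comm]

lemma inner_vsub_vsub (h : IsOuterApex W Y Z p) :
    ⟪Z -ᵥ Y, p -ᵥ Y⟫ = 1 / 2 * ⟪Z -ᵥ Y, Z -ᵥ Y⟫ := by
  have hdist : ‖(p -ᵥ Y) - (Z -ᵥ Y)‖ = ‖Z -ᵥ Y‖ := by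
    rw [vsub_sub_vsub_cancel_right, ← dist_eq_norm_vsub V, ← dist_eq_norm_vsub V, h.dist_right,
      dist_comm]
  have hsq := norm_sub_sq_real (p -ᵥ Y) (Z -ᵥ Y)
  rw [hdist, ← real_inner_self_eq_norm_sq, ← real_inner_self_eq_norm_sq, h.inner_vsub_self,
    real_inner_comm (Z -ᵥ Y) (p -ᵥ Y)] at hsq
  linarith

lemma inner_quarterTurn_vsub (h : IsOuterApex W Y Z p) :
    ⟪quarterTurn (Z -ᵥ Y) (W -ᵥ Y) (Z -ᵥ Y), p -ᵥ Y⟫ = -(√3 / 2) * ⟪Z -ᵥ Y, Z -ᵥ Y⟫ := by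
  have hneg := h.inner_quarterTurn_vsub_neg
  have hinner := h.inner_vsub_vsub
  have hpythagoras : ⟪Z -ᵥ Y, Z -ᵥ Y⟫ * ⟪p -ᵥ Y, p -ᵥ Y⟫ = ⟪Z -ᵥ Y, p -ᵥ Y⟫ ^ 2 +
      ⟪quarterTurn (Z -ᵥ Y) (W -ᵥ Y) (Z -ᵥ Y), p -ᵥ Y⟫ ^ 2 := by
    rw [← real_inner_smul_left,
      inner_self_smul_eq_add_quarterTurn h.linearIndependent h.vsub_mem_span, inner_add_left,
      real_inner_smul_left, real_inner_smul_left, pow_two, pow_two]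
  set x := ⟪quarterTurn (Z -ᵥ Y) (W -ᵥ Y) (Z -ᵥ Y), p -ᵥ Y⟫
  have hsq : (-x) ^ 2 = (√3 / 2 * ⟪Z -ᵥ Y, Z -ᵥ Y⟫) ^ 2 := by
    have h3 : √3 ^ 2 = (3 : ℝ) := Real.sq_sqrt (by norm_num)
    rw [h.inner_vsub_self, hinner] at hpythagoras
    linear_combination -hpythagoras - 1 / 4 * ⟪Z -ᵥ Y, Z -ᵥ Y⟫ ^ 2 * h3
  have hnonneg : 0 ≤ √3 / 2 * ⟪Z -ᵥ Y, Z -ᵥ Y⟫ := mul_nonneg (by positivity) real_inner_self_nonneg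
  rw [neg_mul, ← (sq_eq_sq₀ (by linarith) hnonneg).1 hsq, neg_neg]

lemma eq_outerApex (h : IsOuterApex W Y Z p) : p = outerApex W Y Z := by
  have hne : ⟪Z -ᵥ Y, Z -ᵥ Y⟫ ≠ 0 := inner_self_ne_zero.2 (h.linearIndependent.ne_zero 0)
  have hdecomp := inner_self_smul_eq_add_quarterTurn h.linearIndependent h.vsub_mem_span
  rw [h.inner_vsub_vsub, h.inner_quarterTurn_vsub] at hdecomp
  refine vsub_left_cancel (p := Y) (smul_right_injective V hne ?_)
  simp only [hdecomp, outerApex_vsub, vsub_self]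
  module

lemma mem_outerCircle (h : IsOuterApex W Y Z p) : p ∈ outerCircle W Y Z := by
  rw [h.eq_outerApex]
  exact outerApex_mem_outerCircle h.linearIndependent

lemma mem_affineSpan (h : IsOuterApex W Y Z p) : p ∈ affineSpan ℝ {W, Y, Z} := by
  rw [← affineSpan_insert_affineSpan]
  exact mem_affineSpan_insert_of_sOppSide h.sOppSide

lemma ne_opposite (h : IsOuterApex W Y Z p) : p ≠ W :=
  fun hpW => AffineSubspace.not_sOppSide_self _ _ (hpW ▸ h.sOppSide)

lemma concyclic (h : IsOuterApex W Y Z p) (hq : q ∈ outerCircle W Y Z)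
    (hspan : q ∈ affineSpan ℝ {W, Y, Z}) : Concyclic {p, Y, Z, q} := by
  have hY : Y ∈ affineSpan ℝ {W, Y, Z} := subset_affineSpan ℝ _ (by simp)
  have hZ : Z ∈ affineSpan ℝ {W, Y, Z} := subset_affineSpan ℝ _ (by simp)
  refine concyclic_of_subset_sphere_of_subset_affineSpan_triple (s := outerCircle W Y Z) ?_
    (Set.insert_subset h.mem_affineSpan (Set.insert_subset hY (Set.pair_subset hZ hspan)))
  exact Set.insert_subset h.mem_outerCircle (Set.insert_subset
    (left_mem_outerCircle h.linearIndependent)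
    (Set.pair_subset (right_mem_outerCircle h.linearIndependent) hq))

end IsOuterApex

section Concurrence

variable (h : LinearIndependent ℝ ![B -ᵥ A, C -ᵥ A])
include h

lemma inner_outerApex_vsub_center_sideAB :
    ⟪outerApex A B C -ᵥ A, (outerCircle C A B).center -ᵥ A⟫ =
      1 / 2 * ⟪B -ᵥ A, C -ᵥ A⟫ + √3 / 6 * parallelogramArea (B -ᵥ A) (C -ᵥ A) := by
  have h3 : √3 ^ 2 = (3 : ℝ) := Real.sq_sqrt (by norm_num)
  rw [outerApex_vsub, outerCircle_center_vsub, quarterTurn_vsub_rotate A B C, vsub_self, zero_add,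
    ← vsub_sub_vsub_cancel_right C B A,
    inner_sub_smul_quarterTurn h _ _ _ (Submodule.subset_span (by simp))]
  simp only [map_add, map_sub, map_smul, inner_add_left, inner_sub_left, real_inner_smul_left,
    real_inner_smul_right, inner_quarterTurn_self, inner_quarterTurn_snd_fst,
    real_inner_comm (B -ᵥ A) (C -ᵥ A)]
  linear_combination (⟪B -ᵥ A, C -ᵥ A⟫ - ⟪B -ᵥ A, B -ᵥ A⟫) / 12 * h3

lemma inner_outerApex_vsub_center_sideCA :
    ⟪outerApex A B C -ᵥ A, (outerCircle B C A).center -ᵥ A⟫ =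
      1 / 2 * ⟪B -ᵥ A, C -ᵥ A⟫ + √3 / 6 * parallelogramArea (B -ᵥ A) (C -ᵥ A) := by
  have h3 : √3 ^ 2 = (3 : ℝ) := Real.sq_sqrt (by norm_num)
  rw [outerApex_vsub, outerCircle_center_vsub, quarterTurn_vsub_rotate A B C,
    ← quarterTurn_vsub_rotate C A B, vsub_self, add_zero, ← vsub_sub_vsub_cancel_right C B A,
    ← neg_vsub_eq_vsub_rev C A,
    inner_sub_smul_quarterTurn h _ _ _ (neg_mem (Submodule.subset_span (by simp)))]
  simp only [map_add, map_sub, map_smul, inner_add_left, inner_sub_left, inner_neg_right,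
    real_inner_smul_left, real_inner_smul_right, inner_quarterTurn_self,
    inner_quarterTurn_fst_snd]
  linear_combination (⟪B -ᵥ A, C -ᵥ A⟫ - ⟪C -ᵥ A, C -ᵥ A⟫) / 12 * h3

lemma two_mul_inner_outerApex_vsub_center_sideBC :
    2 * ⟪outerApex A B C -ᵥ A, (outerCircle A B C).center -ᵥ A⟫ =
      ⟪outerApex A B C -ᵥ A, outerApex A B C -ᵥ A⟫ + ⟪B -ᵥ A, C -ᵥ A⟫ +
        √3 / 3 * parallelogramArea (B -ᵥ A) (C -ᵥ A) := by
  have h3 : √3 ^ 2 = (3 : ℝ) := Real.sq_sqrt (by norm_num)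
  have hmem : (C -ᵥ A) - (B -ᵥ A) ∈ Submodule.span ℝ {B -ᵥ A, C -ᵥ A} :=
    sub_mem (Submodule.subset_span (by simp)) (Submodule.subset_span (by simp))
  rw [outerApex_vsub, outerCircle_center_vsub, quarterTurn_vsub_rotate A B C,
    ← vsub_sub_vsub_cancel_right C B A, inner_sub_smul_quarterTurn h _ _ _ hmem,
    inner_sub_smul_quarterTurn h _ _ _ hmem]
  simp only [map_add, map_sub, map_smul, inner_add_left, inner_sub_left, inner_add_right,
    inner_sub_right, real_inner_smul_left, real_inner_smul_right, inner_quarterTurn_self,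
    inner_quarterTurn_fst_snd, inner_quarterTurn_snd_fst, real_inner_comm (B -ᵥ A) (C -ᵥ A)]
  linear_combination
    -(⟪B -ᵥ A, B -ᵥ A⟫ - 2 * ⟪B -ᵥ A, C -ᵥ A⟫ + ⟪C -ᵥ A, C -ᵥ A⟫) / 12 * h3

end Concurrence

/-- Lying on a common sphere says little about four points in dimension three or more, so the
circumcircles are expressed through `Concyclic`. -/
theorem torricelli_circumcircles_concurrent_general {A₁ B₁ C₁ : P} (hA : IsOuterApex A B C A₁)
    (hB : IsOuterApex B C A B₁) (hC : IsOuterApex C A B C₁) :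
    ∃ F : P, Concyclic {A₁, B, C, F} ∧ Concyclic {B₁, C, A, F} ∧ Concyclic {C₁, A, B, F} := by
  have hLI := hC.linearIndependent
  have hne : ⟪A₁ -ᵥ A, A₁ -ᵥ A⟫ ≠ 0 := inner_self_ne_zero.2 (vsub_ne_zero.2 hA.ne_opposite)
  have hBC := two_mul_inner_outerApex_vsub_center_sideBC hLI
  have hCA := inner_outerApex_vsub_center_sideCA hLI
  have hAB := inner_outerApex_vsub_center_sideAB hLI
  rw [← hA.eq_outerApex] at hBC hCA hAB
  obtain ⟨t, ht⟩ : ∃ t, t * ⟪A₁ -ᵥ A, A₁ -ᵥ A⟫ = ⟪B -ᵥ A, C -ᵥ A⟫ +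
      √3 / 3 * parallelogramArea (B -ᵥ A) (C -ᵥ A) := ⟨_, div_mul_cancel₀ _ hne⟩
  have hspan : AffineMap.lineMap A A₁ t ∈ affineSpan ℝ {A, B, C} :=
    AffineMap.lineMap_mem t (mem_affineSpan ℝ (by simp)) hA.mem_affineSpan
  refine ⟨AffineMap.lineMap A A₁ t, hA.concyclic ?_ hspan, hB.concyclic ?_ ?_,
    hC.concyclic ?_ ?_⟩
  · exact lineMap_mem_sphere_of_right_mem hA.mem_outerCircle (by linarith)
  · exact lineMap_mem_sphere (right_mem_outerCircle hB.linearIndependent) (by linarith)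
  · rwa [Set.insert_comm A B, Set.pair_comm A C] at hspan
  · exact lineMap_mem_sphere (left_mem_outerCircle hLI) (by linarith)
  · rwa [Set.pair_comm B C, Set.insert_comm A C] at hspan

end ErectedTriangles

/-- Torricelli's construction: the circumcircles of the three equilateral triangles
erected externally on the sides of a triangle `ABC` have a common point.  Here a
point lies on the circumcircle of a triple of points iff some sphere passes through
the triple and the point (for affinely independent triples such a sphere is unique:
the circumcircle). -/
theorem torricelli_circumcircles_concurrent
    (A B C A₁ B₁ C₁ : EuclideanSpace ℝ (Fin 2))
    (hABC : AffineIndependent ℝ ![A, B, C])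
    (hA₁B : dist A₁ B = dist B C) (hA₁C : dist A₁ C = dist B C)
    (hA₁side : (affineSpan ℝ ({B, C} : Set (EuclideanSpace ℝ (Fin 2)))).SOppSide A₁ A)
    (hB₁C : dist B₁ C = dist C A) (hB₁A : dist B₁ A = dist C A)
    (hB₁side : (affineSpan ℝ ({C, A} : Set (EuclideanSpace ℝ (Fin 2)))).SOppSide B₁ B)
    (hC₁A : dist C₁ A = dist A B) (hC₁B : dist C₁ B = dist A B)
    (hC₁side : (affineSpan ℝ ({A, B} : Set (EuclideanSpace ℝ (Fin 2)))).SOppSide C₁ C) :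
    ∃ P : EuclideanSpace ℝ (Fin 2),
      (∃ s : EuclideanGeometry.Sphere (EuclideanSpace ℝ (Fin 2)),
        A₁ ∈ s ∧ B ∈ s ∧ C ∈ s ∧ P ∈ s) ∧
      (∃ s : EuclideanGeometry.Sphere (EuclideanSpace ℝ (Fin 2)),
        B₁ ∈ s ∧ C ∈ s ∧ A ∈ s ∧ P ∈ s) ∧
      (∃ s : EuclideanGeometry.Sphere (EuclideanSpace ℝ (Fin 2)),
        C₁ ∈ s ∧ A ∈ s ∧ B ∈ s ∧ P ∈ s) := by
  obtain ⟨P, hA, hB, hC⟩ := torricelli_circumcircles_concurrent_general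
    ⟨hA₁B, hA₁C, hA₁side⟩ ⟨hB₁C, hB₁A, hB₁side⟩ ⟨hC₁A, hC₁B, hC₁side⟩
  exact ⟨P, exists_sphere_mem_of_cospherical hA.Cospherical,
    exists_sphere_mem_of_cospherical hB.Cospherical,
    exists_sphere_mem_of_cospherical hC.Cospherical⟩
end
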